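/- arXiv:1812.04086 — 4 statements merged into one kernel-verified Lean document; each statement's English description precedes it below -/
import Mathlib

section
/- Let (Ξ,𝒜,m) be a complete σ-finite measure space and let X be a Suslin space. Let h : Ξ × X → ℝ ∪ {±∞} be 𝒜 ⊗ B(X)-measurable and let 𝒳 ⊆ L⁰(Ξ;X) be a decomposable set of measurable functions. If inf_{x∈𝒳} ∫_Ξ h(ξ, x(ξ)) dm(ξ) < +∞, then inf_{x∈𝒳} ∫_Ξ h(ξ, x(ξ)) dm(ξ) = ∫_Ξ inf_{x∈X} h(ξ, x) dm(ξ). -/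
open MeasureTheory Filter Set Topology
open scoped ENNReal Classical

/-- The positive part of an extended real, as an extended nonnegative real. -/
noncomputable def erealPos (a : EReal) : ℝ≥0∞ := if a = ⊤ then ⊤ else ENNReal.ofReal a.toReal

/-- The integral of an extended-real-valued function, defined as `+∞` unless the
positive part is integrable. -/
noncomputable def eIntegral {α : Type*} [MeasurableSpace α] (μ : Measure α)
    (f : α → EReal) : EReal :=
  if ∫⁻ a, erealPos (f a) ∂μ = ⊤ then ⊤
  else ((∫⁻ a, erealPos (f a) ∂μ : ℝ≥0∞) : EReal) - ((∫⁻ a, erealPos (-f a) ∂μ : ℝ≥0∞) : EReal)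

/-- A Suslin space: a Hausdorff topological space which is the continuous image of a
Polish space. -/
def IsSuslin (X : Type*) [TopologicalSpace X] : Prop :=
  ∃ (P : Type) (_ : TopologicalSpace P), PolishSpace P ∧
    ∃ f : P → X, Continuous f ∧ Function.Surjective f

/-- A set `𝒳` of measurable functions `Ξ → X` is decomposable (w.r.t. the measure `m`) if
for every `x ∈ 𝒳`, every measurable `A` of finite measure and every measurable `x̄` whose
range has compact closure, the function `1_A x̄ + 1_{Aᶜ} x` belongs to `𝒳`. -/
def Decomposable {Ξ X : Type*} [MeasurableSpace Ξ] [TopologicalSpace X] [MeasurableSpace X]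
    (m : Measure Ξ) (𝒳 : Set (Ξ → X)) : Prop :=
  ∀ x ∈ 𝒳, ∀ A : Set Ξ, MeasurableSet A → m A < ⊤ →
    ∀ xb : Ξ → X, Measurable xb → IsCompact (closure (Set.range xb)) →
      (fun ξ => if ξ ∈ A then xb ξ else x ξ) ∈ 𝒳

/-!
The integral of the infimum is a lower bound by monotonicity. For the converse, start from some
`x₀ ∈ 𝒳` with integral `< ⊤` and, for `q` in a countable dense set of levels, cover almost all of
the `ξ` with `⨅ y, h (ξ, y) < q` by countably many sets of finite measure carrying measurable
selections `t` with `h (ξ, t ξ) < q` and relatively compact range. Pasting these one after the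
other into `x₀`, wherever they lower the integrand, stays in `𝒳` by decomposability and produces
integrands that decrease almost everywhere to the infimum, so monotone convergence applies.

The selections need no projection theorem. A measurable set in the product is pulled back, in the
first variable, from a standard Borel space; there it is analytic, i.e. a continuous image of
`ℕ → ℕ`. The measure of its projection is exhausted by the projected images of compact boxes of
`ℕ → ℕ`, and a continuous map on a compact metrizable space has a measurable section.
-/

section Capacity

/-- The Borel cylinder of sequences whose first `k` terms are bounded by those of `n`; it decreases
to the compact box `Iic n` as `k` grows. -/
def initialBox (n : ℕ → ℕ) (k : ℕ) : Set (ℕ → ℕ) := {x | ∀ i < k, x i ≤ n i}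

theorem initialBox_zero (n : ℕ → ℕ) : initialBox n 0 = univ := by
  simp [initialBox]

theorem initialBox_succ (n : ℕ → ℕ) (k : ℕ) :
    initialBox n (k + 1) = initialBox n k ∩ {x | x k ≤ n k} := by
  ext x
  simp only [initialBox, mem_inter_iff, mem_ofPred_eq, Nat.forall_lt_succ_right]

theorem isCompact_Iic_nat_nat (n : ℕ → ℕ) : IsCompact (Iic n) := by
  simpa only [Icc_bot] using isCompact_Icc (a := (⊥ : ℕ → ℕ)) (b := n)

theorem exists_initialBox_subset {n : ℕ → ℕ} {V : Set (ℕ → ℕ)} (hV : IsOpen V)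
    (hnV : Iic n ⊆ V) : ∃ k, initialBox n k ⊆ V := by
  let : MetricSpace (ℕ → ℕ) := PiNat.metricSpaceNatNat
  obtain ⟨δ, hδ, hδV⟩ := (isCompact_Iic_nat_nat n).exists_thickening_subset_open hV hnV
  obtain ⟨k, hk⟩ := exists_pow_lt_of_lt_one hδ (one_half_lt_one (α := ℝ))
  refine ⟨k, fun x hx => hδV (Metric.mem_thickening_iff.2 ⟨x ⊓ n, mem_Iic.2 inf_le_right, ?_⟩)⟩
  refine (PiNat.mem_cylinder_iff_dist_le.1 ?_).trans_lt hk
  exact PiNat.mem_cylinder_iff.2 fun i hi => (min_eq_left (hx i hi)).symm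

theorem exists_measure_iUnion_le_add {α : Type*} [MeasurableSpace α] {μ : Measure α}
    {s : ℕ → Set α} (hs : Monotone s) (hfin : μ (⋃ n, s n) ≠ ⊤) {δ : ℝ≥0∞} (hδ : δ ≠ 0) :
    ∃ n, μ (⋃ n, s n) ≤ μ (s n) + δ :=
  (((tendsto_measure_iUnion_atTop hs).add_const δ).eventually_const_le
    (ENNReal.lt_add_right hfin hδ)).exists

variable {Z : Type*} [MeasurableSpace Z] (μ : Measure Z) [IsFiniteMeasure μ]

theorem exists_measure_image_le_image_inter_add (F : (ℕ → ℕ) → Z) (D : Set (ℕ → ℕ)) (i : ℕ)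
    {δ : ℝ≥0∞} (hδ : δ ≠ 0) : ∃ N, μ (F '' D) ≤ μ (F '' (D ∩ {x | x i ≤ N})) + δ := by
  have hmono : Monotone fun N : ℕ => F '' (D ∩ {x | x i ≤ N}) := fun _ _ hab =>
    image_mono (inter_subset_inter_right _ fun _ hx => le_trans hx hab)
  have hunion : ⋃ N : ℕ, F '' (D ∩ {x | x i ≤ N}) = F '' D := by
    have hcover : ⋃ N : ℕ, {x : ℕ → ℕ | x i ≤ N} = univ :=
      iUnion_eq_univ_iff.2 fun x => ⟨x i, le_refl (x i)⟩
    rw [← image_iUnion, ← inter_iUnion, hcover, inter_univ]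
  simpa only [hunion] using exists_measure_iUnion_le_add hmono (measure_ne_top μ _) hδ

theorem exists_forall_measure_range_le_image_initialBox_add (F : (ℕ → ℕ) → Z) {δ : ℕ → ℝ≥0∞}
    (hδ : ∀ i, δ i ≠ 0) :
    ∃ n, ∀ k, μ (range F) ≤ μ (F '' initialBox n k) + ∑ i ∈ Finset.range k, δ i := by
  choose N hN using fun D i => exists_measure_image_le_image_inter_add μ F D i (hδ i)
  let D : ℕ → Set (ℕ → ℕ) := fun k => Nat.rec univ (fun i D => D ∩ {x | x i ≤ N D i}) k
  have hD (k : ℕ) : initialBox (fun i => N (D i) i) k = D k := by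
    induction k with
    | zero => exact initialBox_zero _
    | succ k ih => rw [initialBox_succ, ih]
  refine ⟨fun i => N (D i) i, fun k => ?_⟩
  rw [hD]
  induction k with
  | zero => simp [D]
  | succ k ih =>
    calc μ (range F) ≤ μ (F '' D k) + ∑ i ∈ Finset.range k, δ i := ih
      _ ≤ μ (F '' D (k + 1)) + δ k + ∑ i ∈ Finset.range k, δ i := by gcongr; exact hN (D k) k
      _ = μ (F '' D (k + 1)) + ∑ i ∈ Finset.range (k + 1), δ i := by
        rw [Finset.sum_range_succ, add_assoc, add_comm (δ k)]

theorem exists_measure_range_le_image_Iic_add [TopologicalSpace Z] [μ.OuterRegular]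
    {F : (ℕ → ℕ) → Z} (hF : Continuous F) {ε : ℝ≥0∞} (hε : ε ≠ 0) :
    ∃ n, μ (range F) ≤ μ (F '' Iic n) + ε := by
  have hε2 : ε / 2 ≠ 0 := (ENNReal.half_pos hε).ne'
  obtain ⟨δ, hδ, hδε⟩ := ENNReal.exists_pos_sum_of_countable' hε2 ℕ
  obtain ⟨n, hn⟩ := exists_forall_measure_range_le_image_initialBox_add μ F fun i => (hδ i).ne'
  obtain ⟨U, hnU, hU, hμU⟩ := (F '' Iic n).exists_isOpen_le_add μ hε2
  obtain ⟨k, hk⟩ := exists_initialBox_subset (hU.preimage hF) (image_subset_iff.1 hnU)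
  refine ⟨n, ?_⟩
  calc μ (range F) ≤ μ (F '' initialBox n k) + ∑ i ∈ Finset.range k, δ i := hn k
    _ ≤ μ U + ε / 2 := by
      gcongr
      exacts [image_subset_iff.2 hk, (ENNReal.sum_le_tsum _).trans hδε.le]
    _ ≤ μ (F '' Iic n) + ε / 2 + ε / 2 := by gcongr
    _ = μ (F '' Iic n) + ε := by rw [add_assoc, ENNReal.add_halves]

end Capacity

section MeasurableSection

variable {Z : Type*} [TopologicalSpace Z] [T2Space Z] [MeasurableSpace Z] [OpensMeasurableSpace Z]

/- Choosing the least point of each fibre makes the sublevel sets of the section images of compact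
sets. -/
theorem exists_measurable_section_of_linearOrder {L : Type*} [LinearOrder L] [TopologicalSpace L]
    [OrderTopology L] [SecondCountableTopology L] [MeasurableSpace L] [BorelSpace L]
    {K : Set L} [CompactSpace K] [Nonempty K] {F : K → Z} (hF : Continuous F) :
    ∃ t : Z → K, Measurable t ∧ ∀ x, F (t (F x)) = F x := by
  obtain ⟨x₀⟩ := ‹Nonempty K›
  have hleast (z : Z) : ∃ x, (z ∈ range F → IsLeast (F ⁻¹' {z}) x) ∧ (z ∉ range F → x = x₀) := by
    by_cases hz : z ∈ range F
    · obtain ⟨x, hx⟩ := (isClosed_singleton.preimage hF).isCompact.exists_isLeast hz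
      exact ⟨x, fun _ => hx, fun h => absurd hz h⟩
    · exact ⟨x₀, fun h => absurd h hz, fun _ => rfl⟩
  choose t ht ht₀ using hleast
  have himage (C : Set K) (hC : IsClosed C) : MeasurableSet (F '' C) :=
    (hC.isCompact.image hF).measurableSet
  have hsublevel (a : L) : {z | (t z : L) ≤ a} =
      F '' {x | (x : L) ≤ a} ∪ ((range F)ᶜ ∩ {_z | (x₀ : L) ≤ a}) := by
    ext z
    by_cases hz : z ∈ range F
    · have hiff : (t z : L) ≤ a ↔ ∃ x : K, (x : L) ≤ a ∧ F x = z :=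
        ⟨fun h => ⟨t z, h, (ht z hz).1⟩, fun ⟨x, hxa, hxz⟩ =>
          (Subtype.coe_le_coe.2 ((ht z hz).2 hxz)).trans hxa⟩
      simpa [hz] using hiff
    · have hne (x : K) : F x ≠ z := fun hx => hz ⟨x, hx⟩
      simp [ht₀ z hz, hne]
  refine ⟨t, (measurable_of_Iic fun a => ?_).subtype_mk, fun x => (ht (F x) ⟨x, rfl⟩).1⟩
  change MeasurableSet {z | (t z : L) ≤ a}
  rw [hsublevel]
  refine (himage _ (isClosed_le continuous_subtype_val continuous_const)).union ?_
  rw [← image_univ]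
  exact (himage _ isClosed_univ).compl.inter (.const _)

theorem exists_measurable_section_of_compactSpace {C : Type*} [TopologicalSpace C] [CompactSpace C]
    [TopologicalSpace.MetrizableSpace C] [Nonempty C] [MeasurableSpace C] [BorelSpace C] {F : C → Z}
    (hF : Continuous F) : ∃ t : Z → C, Measurable t ∧ ∀ x, F (t (F x)) = F x := by
  let := TopologicalSpace.metrizableSpaceMetric C
  obtain ⟨p, hp, hp_surj⟩ := exists_nat_bool_continuous_surjective_of_compact C
  have hcantor : CompactSpace cantorSet := cantorSetHomeomorphNatToBool.symm.compactSpace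
  have hne : Nonempty cantorSet := ⟨cantorSetHomeomorphNatToBool.symm fun _ => false⟩
  let q : cantorSet → C := p ∘ cantorSetHomeomorphNatToBool
  have hq : Continuous q := hp.comp cantorSetHomeomorphNatToBool.continuous
  obtain ⟨t, ht, hFt⟩ := exists_measurable_section_of_linearOrder (hF.comp hq)
  refine ⟨q ∘ t, hq.measurable.comp ht, fun x => ?_⟩
  obtain ⟨y, rfl⟩ := (hp_surj.comp cantorSetHomeomorphNatToBool.surjective) x
  exact hFt y

end MeasurableSection

section CompactSelection

/-- `t` is a measurable selection of the section map `ξ ↦ {x | (ξ, x) ∈ S}` over the measurable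
set `A`. It is defined everywhere and takes values in a relatively compact set, which is what
decomposability asks of the functions being pasted. -/
structure IsCompactSelection {Ξ X : Type*} [MeasurableSpace Ξ] [TopologicalSpace X]
    [MeasurableSpace X] (S : Set (Ξ × X)) (A : Set Ξ) (t : Ξ → X) : Prop where
  measurableSet : MeasurableSet A
  measurable : Measurable t
  isCompact_closure_range : IsCompact (closure (range t))
  mem : ∀ ξ ∈ A, (ξ, t ξ) ∈ S

variable {Ξ Z X : Type*} [MeasurableSpace Ξ] [MeasurableSpace Z] [TopologicalSpace X]
  [MeasurableSpace X]

theorem IsCompactSelection.comp {T : Set (Z × X)} {B : Set Z} {t : Z → X}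
    (ht : IsCompactSelection T B t) {φ : Ξ → Z} (hφ : Measurable φ) :
    IsCompactSelection (Prod.map φ id ⁻¹' T) (φ ⁻¹' B) (t ∘ φ) where
  measurableSet := hφ ht.measurableSet
  measurable := ht.measurable.comp hφ
  isCompact_closure_range := ht.isCompact_closure_range.of_isClosed_subset isClosed_closure
    (closure_mono (range_comp_subset_range φ t))
  mem ξ hξ := ht.mem (φ ξ) hξ

theorem IsCompactSelection.inter {S : Set (Ξ × X)} {A : Set Ξ} {t : Ξ → X}
    (ht : IsCompactSelection S A t) {B : Set Ξ} (hB : MeasurableSet B) :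
    IsCompactSelection S (A ∩ B) t :=
  { ht with
    measurableSet := ht.measurableSet.inter hB
    mem := fun ξ hξ => ht.mem ξ hξ.1 }

variable [R1Space X] [BorelSpace X] [Nonempty X]

theorem exists_isCompactSelection_of_analyticSet [TopologicalSpace Z] [T2Space Z]
    [OpensMeasurableSpace Z] (μ : Measure Z) [IsFiniteMeasure μ] [μ.OuterRegular]
    {T : Set (Z × X)} (hT : AnalyticSet T) {ε : ℝ≥0∞} (hε : ε ≠ 0) :
    ∃ B t, IsCompactSelection T B t ∧ μ (Prod.fst '' T \ B) ≤ ε := by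
  rw [AnalyticSet] at hT
  obtain rfl | ⟨g, hg, rfl⟩ := hT
  · let x₀ := Classical.arbitrary X
    refine ⟨∅, fun _ => x₀, ⟨.empty, measurable_const, ?_, by simp⟩, by simp⟩
    exact isCompact_singleton.closure_of_subset range_const_subset
  obtain ⟨n, hn⟩ := exists_measure_range_le_image_Iic_add μ (continuous_fst.comp hg) hε
  have hK : CompactSpace (Iic n) := isCompact_iff_compactSpace.1 (isCompact_Iic_nat_nat n)
  have hgK : Continuous fun x : Iic n => g x := hg.comp continuous_subtype_val
  obtain ⟨s, hs, hgs⟩ := exists_measurable_section_of_compactSpace (continuous_fst.comp hgK)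
  have hB : MeasurableSet ((Prod.fst ∘ g) '' Iic n) :=
    ((isCompact_Iic_nat_nat n).image (continuous_fst.comp hg)).measurableSet
  have hsnd : Continuous fun x : Iic n => (g x).2 := continuous_snd.comp hgK
  refine ⟨(Prod.fst ∘ g) '' Iic n, fun z => (g (s z)).2,
    ⟨hB, hsnd.measurable.comp hs, ?_, ?_⟩, ?_⟩
  · exact (isCompact_range hsnd).closure_of_subset
      (range_comp_subset_range s fun x : Iic n => (g x).2)
  · rintro _ ⟨x, hx, rfl⟩
    exact ⟨s (g x).1, Prod.ext (hgs ⟨x, hx⟩) rfl⟩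
  · rw [← range_comp]
    rwa [measure_sdiff_le_iff_le_add hB.nullMeasurableSet (image_subset_range _ _)
      (measure_ne_top μ _)]

end CompactSelection

section SuslinSelection

theorem exists_standardBorelSpace_prodMap_preimage {Ξ X : Type*} [MeasurableSpace Ξ]
    [MeasurableSpace X] {S : Set (Ξ × X)} (hS : MeasurableSet S) :
    ∃ (Z : Type) (_ : MeasurableSpace Z) (_ : StandardBorelSpace Z) (φ : Ξ → Z) (T : Set (Z × X)),
      Measurable φ ∧ MeasurableSet T ∧ Prod.map φ id ⁻¹' T = S := by
  induction S, hS using MeasurableSpace.induction_on_inter generateFrom_prod.symm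
    isPiSystem_prod with
  | empty => exact ⟨Unit, inferInstance, inferInstance, fun _ => (), ∅, measurable_const, .empty,
      preimage_empty⟩
  | basic S hS =>
    obtain ⟨A, hA, B, hB, rfl⟩ := hS
    refine ⟨Prop, inferInstance, inferInstance, (· ∈ A), {True} ×ˢ B, hA.mem,
      (measurableSet_singleton _).prod hB, ?_⟩
    ext ⟨ξ, x⟩
    simp
  | compl S _ ih =>
    obtain ⟨Z, _, _, φ, T, hφ, hT, rfl⟩ := ih
    exact ⟨Z, _, ‹_›, φ, Tᶜ, hφ, hT.compl, rfl⟩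
  | iUnion S _ _ ih =>
    choose Z _ _ φ T hφ hT hS using ih
    refine ⟨∀ n, Z n, inferInstance, inferInstance, fun ξ n => φ n ξ,
      ⋃ n, Prod.map (fun z => z n) id ⁻¹' T n, measurable_pi_lambda _ hφ, ?_, ?_⟩
    · exact .iUnion fun n => ((measurable_pi_apply n).prodMap measurable_id) (hT n)
    · simp only [preimage_iUnion, ← hS]
      rfl

theorem IsSuslin.analyticSet_of_measurableSet_prod {Z X : Type*} [TopologicalSpace Z]
    [PolishSpace Z] [MeasurableSpace Z] [BorelSpace Z] [TopologicalSpace X] [MeasurableSpace X]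
    [BorelSpace X] (hX : IsSuslin X) {T : Set (Z × X)} (hT : MeasurableSet T) :
    AnalyticSet T := by
  obtain ⟨P, _, _, f, hf, hf_surj⟩ := hX
  borelize P
  have hT' : MeasurableSet (Prod.map id f ⁻¹' T : Set (Z × P)) :=
    (measurable_id.prodMap hf.measurable) hT
  rw [← image_preimage_eq T (Function.surjective_id.prodMap hf_surj)]
  exact hT'.analyticSet.image_of_continuous (continuous_id.prodMap hf)

variable {Ξ X : Type*} [MeasurableSpace Ξ] [TopologicalSpace X] [R1Space X] [MeasurableSpace X]
  [BorelSpace X] [Nonempty X] {S : Set (Ξ × X)}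

theorem IsSuslin.exists_isCompactSelection (hX : IsSuslin X) (hS : MeasurableSet S)
    (ν : Measure Ξ) [IsFiniteMeasure ν] {ε : ℝ≥0∞} (hε : ε ≠ 0) :
    ∃ A t, IsCompactSelection S A t ∧ ν (Prod.fst '' S \ A) ≤ ε := by
  obtain ⟨Z, _, _, φ, T, hφ, hT, rfl⟩ := exists_standardBorelSpace_prodMap_preimage hS
  let := upgradeStandardBorel Z
  obtain ⟨B, t, ht, hμ⟩ := exists_isCompactSelection_of_analyticSet (ν.map φ)
    (hX.analyticSet_of_measurableSet_prod hT) hε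
  refine ⟨φ ⁻¹' B, t ∘ φ, ht.comp hφ, ?_⟩
  calc ν (Prod.fst '' (Prod.map φ id ⁻¹' T) \ φ ⁻¹' B)
      ≤ ν (φ ⁻¹' (Prod.fst '' T \ B)) := by
        gcongr
        rintro _ ⟨⟨⟨ξ, x⟩, hT, rfl⟩, hB⟩
        exact ⟨⟨_, hT, rfl⟩, hB⟩
    _ ≤ ν.map φ (Prod.fst '' T \ B) := Measure.le_map_apply hφ.aemeasurable _
    _ ≤ ε := hμ

theorem IsSuslin.exists_seq_isCompactSelection_of_isFiniteMeasure (hX : IsSuslin X)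
    (hS : MeasurableSet S) (ν : Measure Ξ) [IsFiniteMeasure ν] :
    ∃ (A : ℕ → Set Ξ) (t : ℕ → Ξ → X), (∀ n, IsCompactSelection S (A n) (t n)) ∧
      ∀ᵐ ξ ∂ν, ξ ∈ Prod.fst '' S → ∃ n, ξ ∈ A n := by
  choose A t ht hA using fun n : ℕ => hX.exists_isCompactSelection hS ν
    (ε := (n : ℝ≥0∞)⁻¹) (ENNReal.inv_ne_zero.2 (ENNReal.natCast_ne_top n))
  refine ⟨A, t, ht, ?_⟩
  have hnull : ν (Prod.fst '' S \ ⋃ n, A n) = 0 := by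
    refine nonpos_iff_eq_zero.1 (ge_of_tendsto' ENNReal.tendsto_inv_nat_nhds_zero fun n => ?_)
    exact (measure_mono (sdiff_subset_sdiff_right (subset_iUnion A n))).trans (hA n)
  filter_upwards [measure_eq_zero_iff_ae_notMem.1 hnull] with ξ hξ hS
  by_contra! hA
  exact hξ ⟨hS, by simpa using hA⟩

theorem IsSuslin.exists_seq_isCompactSelection (hX : IsSuslin X) (hS : MeasurableSet S)
    (m : Measure Ξ) [SigmaFinite m] :
    ∃ (A : ℕ → Set Ξ) (t : ℕ → Ξ → X), (∀ n, IsCompactSelection S (A n) (t n)) ∧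
      (∀ n, m (A n) < ⊤) ∧ ∀ᵐ ξ ∂m, ξ ∈ Prod.fst '' S → ∃ n, ξ ∈ A n := by
  obtain ⟨A, t, ht, hA⟩ := hX.exists_seq_isCompactSelection_of_isFiniteMeasure hS m.toFinite
  refine ⟨fun i => A i.unpair.1 ∩ spanningSets m i.unpair.2, fun i => t i.unpair.1,
    fun i => (ht _).inter (measurableSet_spanningSets m _), fun i => ?_, ?_⟩
  · exact (measure_mono inter_subset_right).trans_lt (measure_spanningSets_lt_top m _)
  · filter_upwards [(absolutelyContinuous_toFinite m).ae_le hA] with ξ hξ hS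
    obtain ⟨n, hn⟩ := hξ hS
    refine ⟨Nat.pair n (spanningSetsIndex m ξ), ?_⟩
    simpa only [Nat.unpair_pair] using ⟨hn, mem_spanningSetsIndex m ξ⟩

end SuslinSelection

section Decomposable

variable {Ξ X L : Type*} [MeasurableSpace Ξ] [TopologicalSpace X] [MeasurableSpace X]
  [TopologicalSpace L] [SecondCountableTopology L] [MeasurableSpace L] [OpensMeasurableSpace L]
  {m : Measure Ξ} {𝒳 : Set (Ξ → X)} {x₀ : Ξ → X}

theorem Decomposable.exists_le_selection [LinearOrder L] [OrderClosedTopology L]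
    (hdec : Decomposable m 𝒳) (hmeas : ∀ x ∈ 𝒳, Measurable x) {h : Ξ × X → L} (hh : Measurable h)
    {S : Set (Ξ × X)} {A : Set Ξ} {t : Ξ → X} (ht : IsCompactSelection S A t) (hA : m A < ⊤)
    (hx₀ : x₀ ∈ 𝒳) :
    ∃ x ∈ 𝒳, (∀ ξ, h (ξ, x ξ) ≤ h (ξ, x₀ ξ)) ∧ ∀ ξ ∈ A, h (ξ, x ξ) ≤ h (ξ, t ξ) := by
  have hgraph {x : Ξ → X} (hx : Measurable x) : Measurable fun ξ => h (ξ, x ξ) :=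
    hh.comp (measurable_id.prodMk hx)
  let B := A ∩ {ξ | h (ξ, t ξ) < h (ξ, x₀ ξ)}
  have hB : MeasurableSet B := ht.measurableSet.inter
    (measurableSet_lt (hgraph ht.measurable) (hgraph (hmeas x₀ hx₀)))
  refine ⟨_, hdec x₀ hx₀ B hB ((measure_mono inter_subset_left).trans_lt hA) t ht.measurable
    ht.isCompact_closure_range, fun ξ => ?_, fun ξ hξA => ?_⟩
  · split_ifs with hξ
    exacts [hξ.2.le, le_rfl]
  · split_ifs with hξ
    exacts [le_rfl, not_lt.1 fun hlt => hξ ⟨hξA, hlt⟩]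

theorem Decomposable.exists_antitone_seq_le_selection [LinearOrder L] [OrderClosedTopology L]
    (hdec : Decomposable m 𝒳) (hmeas : ∀ x ∈ 𝒳, Measurable x) {h : Ξ × X → L} (hh : Measurable h)
    {S : ℕ → Set (Ξ × X)} {A : ℕ → Set Ξ} {t : ℕ → Ξ → X}
    (ht : ∀ i, IsCompactSelection (S i) (A i) (t i)) (hA : ∀ i, m (A i) < ⊤) (hx₀ : x₀ ∈ 𝒳) :
    ∃ x : ℕ → Ξ → X, x 0 = x₀ ∧ (∀ i, x i ∈ 𝒳) ∧ (∀ ξ, Antitone fun i => h (ξ, x i ξ)) ∧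
      ∀ i, ∀ ξ ∈ A i, h (ξ, x (i + 1) ξ) ≤ h (ξ, t i ξ) := by
  choose next hmem hle hsel using fun i (x : 𝒳) =>
    hdec.exists_le_selection hmeas hh (ht i) (hA i) x.2
  let x : ℕ → 𝒳 := fun i => Nat.rec ⟨x₀, hx₀⟩ (fun i x => ⟨next i x, hmem i x⟩) i
  exact ⟨fun i => (x i).1, rfl, fun i => (x i).2,
    fun ξ => antitone_nat_of_succ_le fun i => hle i (x i) ξ, fun i => hsel i (x i)⟩

theorem Decomposable.exists_antitone_seq_tendsto_iInf [CompleteLinearOrder L] [DenselyOrdered L]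
    [OrderTopology L] [R1Space X] [BorelSpace X] [SigmaFinite m] (hX : IsSuslin X)
    (hdec : Decomposable m 𝒳) (hmeas : ∀ x ∈ 𝒳, Measurable x) {h : Ξ × X → L} (hh : Measurable h)
    (hx₀ : x₀ ∈ 𝒳) :
    ∃ x : ℕ → Ξ → X, x 0 = x₀ ∧ (∀ i, x i ∈ 𝒳) ∧ (∀ ξ, Antitone fun i => h (ξ, x i ξ)) ∧
      ∀ᵐ ξ ∂m, Tendsto (fun i => h (ξ, x i ξ)) atTop (𝓝 (⨅ y, h (ξ, y))) := by
  rcases isEmpty_or_nonempty Ξ with _ | ⟨⟨ξ₀⟩⟩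
  · exact ⟨fun _ => x₀, rfl, fun _ => hx₀, isEmptyElim, .of_forall isEmptyElim⟩
  have : Nonempty X := ⟨x₀ ξ₀⟩
  let q := TopologicalSpace.denseSeq L
  choose A t ht hA hcover using fun j =>
    hX.exists_seq_isCompactSelection (hh (measurableSet_Iio (a := q j))) m
  obtain ⟨x, hx0, hx, hanti, hxt⟩ := hdec.exists_antitone_seq_le_selection hmeas hh
    (fun i => ht i.unpair.1 i.unpair.2) (fun i => hA i.unpair.1 i.unpair.2) hx₀
  refine ⟨x, hx0, hx, hanti, ?_⟩
  filter_upwards [ae_all_iff.2 hcover] with ξ hξ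
  suffices hinf : ⨅ i, h (ξ, x i ξ) = ⨅ y, h (ξ, y) from hinf ▸ tendsto_atTop_iInf (hanti ξ)
  refine le_antisymm (le_of_forall_gt_imp_ge_of_dense fun a ha => ?_)
    (le_iInf fun i => iInf_le _ (x i ξ))
  obtain ⟨_, ⟨j, rfl⟩, hqj, hja⟩ := (TopologicalSpace.denseRange_denseSeq L).exists_between ha
  obtain ⟨y, hy⟩ := iInf_lt_iff.1 hqj
  obtain ⟨n, hn⟩ := hξ j ⟨(ξ, y), hy, rfl⟩
  have hlt : h (ξ, t j n ξ) < q j := (ht j n).mem ξ hn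
  have hle := hxt (Nat.pair j n) ξ
  rw [Nat.unpair_pair] at hle
  exact (iInf_le _ _).trans ((hle hn).trans (hlt.trans hja).le)

end Decomposable

section ExtendedIntegral

variable {α : Type*} [MeasurableSpace α] {μ : Measure α}

theorem erealPos_eq_toENNReal : erealPos = EReal.toENNReal := by
  funext a
  unfold erealPos EReal.toENNReal
  congr

theorem monotone_erealPos : Monotone erealPos := fun _ _ hab => by
  simpa only [erealPos_eq_toENNReal] using EReal.toENNReal_le_toENNReal hab

theorem continuous_erealPos : Continuous erealPos :=
  erealPos_eq_toENNReal ▸ EReal.continuous_toENNReal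

theorem eIntegral_of_lintegral_ne_top {f : α → EReal} (hf : ∫⁻ a, erealPos (f a) ∂μ ≠ ⊤) :
    eIntegral μ f = (∫⁻ a, erealPos (f a) ∂μ : ℝ≥0∞) - (∫⁻ a, erealPos (-f a) ∂μ : ℝ≥0∞) :=
  if_neg hf

theorem lintegral_erealPos_ne_top {f : α → EReal} (hf : eIntegral μ f ≠ ⊤) :
    ∫⁻ a, erealPos (f a) ∂μ ≠ ⊤ :=
  fun htop => hf (if_pos htop)

theorem eIntegral_mono {f g : α → EReal} (hfg : f ≤ g) : eIntegral μ f ≤ eIntegral μ g := by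
  have hpos : ∫⁻ a, erealPos (f a) ∂μ ≤ ∫⁻ a, erealPos (g a) ∂μ :=
    lintegral_mono fun a => monotone_erealPos (hfg a)
  have hneg : ∫⁻ a, erealPos (-g a) ∂μ ≤ ∫⁻ a, erealPos (-f a) ∂μ :=
    lintegral_mono fun a => monotone_erealPos (EReal.neg_le_neg_iff.2 (hfg a))
  by_cases hg : ∫⁻ a, erealPos (g a) ∂μ = ⊤
  · exact le_top.trans_eq (if_pos hg).symm
  rw [eIntegral_of_lintegral_ne_top hg,
    eIntegral_of_lintegral_ne_top (ne_top_of_le_ne_top hg hpos)]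
  exact EReal.sub_le_sub (EReal.coe_ennreal_le_coe_ennreal_iff.2 hpos)
    (EReal.coe_ennreal_le_coe_ennreal_iff.2 hneg)

theorem eIntegral_tendsto_of_tendsto_of_antitone {f : ℕ → α → EReal} {F : α → EReal}
    (hf : ∀ n, AEMeasurable (f n) μ) (h_anti : ∀ᵐ a ∂μ, Antitone fun n => f n a)
    (h0 : eIntegral μ (f 0) ≠ ⊤) (h_tendsto : ∀ᵐ a ∂μ, Tendsto (fun n => f n a) atTop (𝓝 (F a))) :
    Tendsto (fun n => eIntegral μ (f n)) atTop (𝓝 (eIntegral μ F)) := by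
  have hpos_anti : ∀ᵐ a ∂μ, Antitone fun n => erealPos (f n a) :=
    h_anti.mono fun a ha => monotone_erealPos.comp_antitone ha
  have hneg_mono : ∀ᵐ a ∂μ, Monotone fun n => erealPos (-f n a) :=
    h_anti.mono fun a ha _ _ hij => monotone_erealPos (EReal.neg_le_neg_iff.2 (ha hij))
  have hpos : Tendsto (fun n => ∫⁻ a, erealPos (f n a) ∂μ) atTop (𝓝 (∫⁻ a, erealPos (F a) ∂μ)) :=
    lintegral_tendsto_of_tendsto_of_antitone
      (fun n => continuous_erealPos.measurable.comp_aemeasurable (hf n)) hpos_anti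
      (lintegral_erealPos_ne_top h0)
      (h_tendsto.mono fun a ha => (continuous_erealPos.tendsto _).comp ha)
  have hneg : Tendsto (fun n => ∫⁻ a, erealPos (-f n a) ∂μ) atTop
      (𝓝 (∫⁻ a, erealPos (-F a) ∂μ)) :=
    lintegral_tendsto_of_tendsto_of_monotone
      (fun n => continuous_erealPos.measurable.comp_aemeasurable (hf n).neg) hneg_mono
      (h_tendsto.mono fun a ha => (continuous_erealPos.tendsto _).comp (ha.neg))
  have hfin (n : ℕ) : ∫⁻ a, erealPos (f n a) ∂μ ≠ ⊤ :=
    ne_top_of_le_ne_top (lintegral_erealPos_ne_top h0)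
      (lintegral_mono_ae (hpos_anti.mono fun _ ha => ha n.zero_le))
  have hFfin : ∫⁻ a, erealPos (F a) ∂μ ≠ ⊤ :=
    ne_top_of_le_ne_top (hfin 0) (le_of_tendsto' hpos fun n =>
      lintegral_mono_ae (hpos_anti.mono fun _ ha => ha n.zero_le))
  simp only [eIntegral_of_lintegral_ne_top (hfin _), eIntegral_of_lintegral_ne_top hFfin,
    sub_eq_add_neg]
  refine (EReal.continuousAt_add ?_ ?_).tendsto.comp (.prodMk_nhds
    ((continuous_coe_ennreal_ereal.tendsto _).comp hpos)
    ((continuous_coe_ennreal_ereal.tendsto _).comp hneg).neg)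
  · exact .inl (EReal.coe_ennreal_eq_top_iff.not.2 hFfin)
  · exact .inl (EReal.coe_ennreal_ne_bot _)

end ExtendedIntegral

theorem statement0_general {Ξ X : Type*} [MeasurableSpace Ξ]
    [TopologicalSpace X] [R1Space X] [MeasurableSpace X] [BorelSpace X] (hX : IsSuslin X)
    (m : Measure Ξ) [SigmaFinite m] (h : Ξ × X → EReal) (hh : Measurable h)
    (𝒳 : Set (Ξ → X)) (h𝒳meas : ∀ x ∈ 𝒳, Measurable x) (h𝒳dec : Decomposable m 𝒳)
    (hfin : (⨅ x ∈ 𝒳, eIntegral m fun ξ => h (ξ, x ξ)) < ⊤) :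
    (⨅ x ∈ 𝒳, eIntegral m fun ξ => h (ξ, x ξ)) = eIntegral m fun ξ => ⨅ y : X, h (ξ, y) := by
  obtain ⟨x₀, hx₀, hx₀fin⟩ : ∃ x₀ ∈ 𝒳, (eIntegral m fun ξ => h (ξ, x₀ ξ)) < ⊤ := by
    simpa only [iInf_lt_iff, exists_prop] using hfin
  obtain ⟨x, rfl, hx, hanti, hlim⟩ :=
    h𝒳dec.exists_antitone_seq_tendsto_iInf hX h𝒳meas hh hx₀
  have hmeas (i : ℕ) : AEMeasurable (fun ξ => h (ξ, x i ξ)) m :=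
    (hh.comp (measurable_id.prodMk (h𝒳meas _ (hx i)))).aemeasurable
  have hint : Tendsto (fun i => eIntegral m fun ξ => h (ξ, x i ξ)) atTop
      (𝓝 (eIntegral m fun ξ => ⨅ y, h (ξ, y))) :=
    eIntegral_tendsto_of_tendsto_of_antitone hmeas (.of_forall hanti) hx₀fin.ne hlim
  exact le_antisymm (ge_of_tendsto' hint fun i => iInf₂_le (x i) (hx i))
    (le_iInf₂ fun x _ => eIntegral_mono fun ξ => iInf_le _ (x ξ))

/-- **Interchange of minimization and integration** (Theorem 2.1): for a complete σ-finite
measure space `(Ξ,𝒜,m)`, a Suslin space `X`, a jointly measurable integrand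
`h : Ξ × X → ℝ ∪ {±∞}` and a decomposable family `𝒳 ⊆ L⁰(Ξ;X)`, one has
`inf_{x∈𝒳} ∫ h(ξ, x(ξ)) dm = ∫ inf_{x∈X} h(ξ,x) dm` as soon as the left side is `< +∞`. -/
theorem statement0 {Ξ X : Type*} [MeasurableSpace Ξ]
    [TopologicalSpace X] [T2Space X] [MeasurableSpace X] [BorelSpace X]
    (hX : IsSuslin X)
    (m : Measure Ξ) [SigmaFinite m] (hm : m.IsComplete)
    (h : Ξ × X → EReal) (hh : Measurable h)
    (𝒳 : Set (Ξ → X)) (h𝒳meas : ∀ x ∈ 𝒳, Measurable x) (h𝒳dec : Decomposable m 𝒳)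
    (hfin : (⨅ x ∈ 𝒳, eIntegral m fun ξ => h (ξ, x ξ)) < ⊤) :
    (⨅ x ∈ 𝒳, eIntegral m fun ξ => h (ξ, x ξ)) = eIntegral m fun ξ => ⨅ y : X, h (ξ, y) :=
  statement0_general hX m h hh 𝒳 h𝒳meas h𝒳dec hfin
end

section
/- Let (Ξ,𝒜,m) be a complete σ-finite measure space and let X be a Suslin space. If h : Ξ × X → ℝ ∪ {±∞} is 𝒜 ⊗ B(X)-measurable, then the function p(ξ) := inf_{x∈X} h(ξ, x) is 𝒜-measurable. -/
/-!
For every value `a`, the set `{ξ | ⨅ y, h (ξ, y) < a}` is the projection of `{h < a}`, so it is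
enough to project measurable sets `B ⊆ Ξ × P` along a standard Borel space `P`. Such a `B` lies in
the σ-algebra generated by countably many rectangles, hence is pulled back from a measurable set of
`(ℕ → Bool) × P` along a measurable map `φ : Ξ → ℕ → Bool`. Projection commutes with this pullback,
and in the Cantor space the projection is an analytic set. Finally, an analytic set arises from
closed sets by the Suslin operation, and the Suslin operation preserves null-measurability: replace
each node of the scheme by a measurable hull of what the branches through it contribute, and discard
the countably many null sets that a node loses when passing to its children.
-/

open MeasureTheory Filter Set Topology
open scoped ENNReal Classical

section SuslinOperation

variable {α : Type*}

/-- The sequences with initial segment `l`. As in `PiNat.res`, initial segments are listed with the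
latest term first, so that the children of a node `l` are the lists `n :: l`. -/
def branchesThrough (l : List ℕ) : Set (ℕ → ℕ) :=
  {σ | PiNat.res σ l.length = l}

/-- The Suslin operation applied to a scheme `A` of sets indexed by the finite sequences of natural
numbers. Finite sequences are reversed, as in `PiNat.res`. -/
def suslinOperation (A : List ℕ → Set α) : Set α :=
  ⋃ σ : ℕ → ℕ, ⋂ n, A (PiNat.res σ n)

/-- The contribution to `suslinOperation A` of the branches passing through the node `l`. -/
def suslinOperationThrough (A : List ℕ → Set α) (l : List ℕ) : Set α :=
  ⋃ σ ∈ branchesThrough l, ⋂ n, A (PiNat.res σ n)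

theorem branchesThrough_nil : branchesThrough [] = univ :=
  eq_univ_of_forall fun _ => rfl

theorem branchesThrough_res (σ : ℕ → ℕ) (n : ℕ) :
    branchesThrough (PiNat.res σ n) = PiNat.cylinder σ n := by
  rw [branchesThrough, PiNat.res_length, PiNat.cylinder_eq_res]

theorem mem_branchesThrough_res (σ : ℕ → ℕ) (n : ℕ) : σ ∈ branchesThrough (PiNat.res σ n) := by
  rw [branchesThrough_res]
  exact PiNat.self_mem_cylinder σ n

theorem mem_branchesThrough_cons {σ : ℕ → ℕ} {l : List ℕ} (hσ : σ ∈ branchesThrough l) :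
    σ ∈ branchesThrough (σ l.length :: l) :=
  congrArg (σ l.length :: ·) hσ

theorem suslinOperation_mono {A E : List ℕ → Set α} (hAE : ∀ l, A l ⊆ E l) :
    suslinOperation A ⊆ suslinOperation E :=
  iUnion_mono fun _ => iInter_mono fun _ => hAE _

theorem suslinOperationThrough_nil (A : List ℕ → Set α) :
    suslinOperationThrough A [] = suslinOperation A := by
  simp only [suslinOperationThrough, suslinOperation, branchesThrough_nil, mem_univ, iUnion_true]

theorem suslinOperationThrough_subset (A : List ℕ → Set α) (l : List ℕ) :
    suslinOperationThrough A l ⊆ A l :=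
  iUnion₂_subset fun σ (hσ : PiNat.res σ l.length = l) =>
    (iInter_subset _ l.length).trans_eq (congrArg A hσ)

theorem suslinOperationThrough_subset_iUnion_cons (A : List ℕ → Set α) (l : List ℕ) :
    suslinOperationThrough A l ⊆ ⋃ n, suslinOperationThrough A (n :: l) :=
  iUnion₂_subset fun σ hσ => subset_iUnion_of_subset (σ l.length) <|
    subset_iUnion₂_of_subset σ (mem_branchesThrough_cons hσ) subset_rfl

theorem mem_suslinOperation_of_forall_exists_cons {E : List ℕ → Set α} {z : α} (h_nil : z ∈ E [])
    (h_cons : ∀ l, z ∈ E l → ∃ n : ℕ, z ∈ E (n :: l)) : z ∈ suslinOperation E := by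
  choose! child h_child using h_cons
  let node (n : ℕ) : List ℕ := (fun l => child l :: l)^[n] []
  have node_succ (n : ℕ) : node (n + 1) = child (node n) :: node n :=
    Function.iterate_succ_apply' _ _ _
  have res_eq_node (n : ℕ) : PiNat.res (fun k => child (node k)) n = node n := by
    induction n with
    | zero => rfl
    | succ n ih => rw [PiNat.res_succ, ih, node_succ]
  have mem_node (n : ℕ) : z ∈ E (node n) := by
    induction n with
    | zero => exact h_nil
    | succ n ih => rw [node_succ]; exact h_child _ ih
  exact mem_iUnion.2 ⟨_, mem_iInter.2 fun n => (res_eq_node n).symm ▸ mem_node n⟩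

theorem sdiff_suslinOperation_subset (E : List ℕ → Set α) :
    E [] \ suslinOperation E ⊆ ⋃ l, E l \ ⋃ n : ℕ, E (n :: l) := by
  rintro z ⟨h_nil, hz⟩
  contrapose! hz
  refine mem_suslinOperation_of_forall_exists_cons h_nil fun l hl => ?_
  by_contra h
  exact hz (mem_iUnion.2 ⟨l, hl, fun h' => h (mem_iUnion.1 h')⟩)

variable [MeasurableSpace α] {μ : Measure α} [SFinite μ]

theorem toMeasurable_ae_le_of_subset {s t : Set α} (ht : NullMeasurableSet t μ) (hst : s ⊆ t) :
    toMeasurable μ s ≤ᵐ[μ] t := by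
  obtain ⟨u, htu, hu, hut⟩ := ht.exists_measurable_superset_ae_eq
  have h_null : μ (toMeasurable μ s \ u) = 0 := by
    rw [sdiff_eq, Measure.measure_toMeasurable_inter_of_sFinite hu.compl, ← sdiff_eq,
      sdiff_eq_empty.2 (hst.trans htu), measure_empty]
  exact (ae_le_set.2 h_null).trans hut.le

theorem nullMeasurableSet_suslinOperation {A : List ℕ → Set α}
    (hA : ∀ l, NullMeasurableSet (A l) μ) : NullMeasurableSet (suslinOperation A) μ := by
  let S := suslinOperationThrough A
  let E (l : List ℕ) : Set α := toMeasurable μ (S l) ∩ A l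
  have hE (l : List ℕ) : NullMeasurableSet (E l) μ :=
    (measurableSet_toMeasurable μ (S l)).nullMeasurableSet.inter (hA l)
  have hSE (l : List ℕ) : S l ⊆ E l :=
    subset_inter (subset_toMeasurable μ _) (suslinOperationThrough_subset A l)
  have h_loss (l : List ℕ) : μ (E l \ ⋃ n : ℕ, E (n :: l)) = 0 := by
    have h_children : S l ⊆ ⋃ n : ℕ, E (n :: l) :=
      (suslinOperationThrough_subset_iUnion_cons A l).trans (iUnion_mono fun n => hSE (n :: l))
    exact measure_mono_null (sdiff_subset_sdiff_left inter_subset_left) <|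
      ae_le_set.1 (toMeasurable_ae_le_of_subset (.iUnion fun n => hE (n :: l)) h_children)
  have h_null : μ (E [] \ suslinOperation A) = 0 :=
    measure_mono_null
      ((sdiff_subset_sdiff_right (suslinOperation_mono fun l => inter_subset_right)).trans
        (sdiff_suslinOperation_subset E))
      (measure_iUnion_null h_loss)
  have h_subset : suslinOperation A ⊆ E [] := suslinOperationThrough_nil A ▸ hSE []
  exact (hE []).congr ((ae_le_set.2 h_null).antisymm h_subset.eventuallyLE)

end SuslinOperation

section AnalyticSet

theorem hasBasis_nhds_cylinder {E : ℕ → Type*} [∀ n, TopologicalSpace (E n)]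
    [∀ n, DiscreteTopology (E n)] (x : ∀ n, E n) :
    (𝓝 x).HasBasis (fun _ => True) (PiNat.cylinder x) := by
  refine ⟨fun t => ⟨fun ht => ?_, fun ⟨n, _, hn⟩ => ?_⟩⟩
  · obtain ⟨_, ⟨y, n, rfl⟩, hx, hyt⟩ :=
      (PiNat.isTopologicalBasis_cylinders E).mem_nhds_iff.1 ht
    exact ⟨n, trivial, PiNat.mem_cylinder_iff_eq.1 hx ▸ hyt⟩
  · exact mem_of_superset
      ((PiNat.isOpen_cylinder E x n).mem_nhds (PiNat.self_mem_cylinder x n)) hn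

variable {C : Type*} [TopologicalSpace C] [T2Space C]

theorem range_eq_suslinOperation_closure {f : (ℕ → ℕ) → C} (hf : Continuous f) :
    range f = suslinOperation fun l => closure (f '' branchesThrough l) := by
  refine Subset.antisymm ?_ (iUnion_subset fun σ z hz => ⟨σ, ?_⟩)
  · rintro _ ⟨σ, rfl⟩
    exact mem_iUnion.2 ⟨σ, mem_iInter.2 fun n =>
      subset_closure (mem_image_of_mem f (mem_branchesThrough_res σ n))⟩
  · simp only [branchesThrough_res, mem_iInter] at hz
    have h_cluster : ClusterPt z (map f (𝓝 σ)) :=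
      ((hasBasis_nhds_cylinder σ).map f).clusterPt_iff_forall_mem_closure.2 fun n _ => hz n
    have : (𝓝 z ⊓ 𝓝 (f σ)).NeBot := h_cluster.mono (hf.tendsto σ)
    exact (eq_of_nhds_neBot this).symm

theorem nullMeasurableSet_of_analyticSet [MeasurableSpace C] [OpensMeasurableSpace C]
    {μ : Measure C} [SFinite μ] {s : Set C} (hs : AnalyticSet s) : NullMeasurableSet s μ := by
  rw [AnalyticSet] at hs
  obtain rfl | ⟨f, hf, rfl⟩ := hs
  · exact nullMeasurableSet_empty
  · rw [range_eq_suslinOperation_closure hf]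
    exact nullMeasurableSet_suslinOperation fun l => isClosed_closure.nullMeasurableSet

end AnalyticSet

section Projection

variable {Ξ P : Type*} [MeasurableSpace Ξ] [MeasurableSpace P]

theorem exists_measurable_prodMap_preimage_eq {B : Set (Ξ × P)} (hB : MeasurableSet B) :
    ∃ φ : Ξ → ℕ → Bool, Measurable φ ∧
      ∃ D : Set ((ℕ → Bool) × P), MeasurableSet D ∧ Prod.map φ id ⁻¹' D = B := by
  rw [← generateFrom_prod] at hB
  induction B, hB using MeasurableSpace.generateFrom_induction with
  | hC t ht =>
    obtain ⟨a, ha, b, hb, rfl⟩ := ht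
    refine ⟨fun ξ _ => decide (ξ ∈ a), ?_, ((fun c => c 0) ⁻¹' {true}) ×ˢ b, ?_, ?_⟩
    · refine measurable_pi_lambda _ fun _ => measurable_to_bool ?_
      simpa only [preimage, mem_singleton_iff, decide_eq_true_eq, ofPred_mem_eq] using
        (show MeasurableSet a from ha)
    · exact (measurable_pi_apply 0 (measurableSet_singleton true)).prod hb
    · ext ⟨ξ, p⟩
      simp
  | empty => exact ⟨fun _ _ => true, measurable_const, ∅, .empty, rfl⟩
  | compl t _ ih =>
    obtain ⟨φ, hφ, D, hD, rfl⟩ := ih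
    exact ⟨φ, hφ, Dᶜ, hD.compl, rfl⟩
  | iUnion s _ ih =>
    choose φ hφ D hD hs using ih
    -- The countably many Boolean sequences `φ n ξ` are stored in one, through `ℕ × ℕ ≃ ℕ`.
    let row (n : ℕ) (c : ℕ → Bool) (k : ℕ) : Bool := c (Nat.pair n k)
    have h_row (n : ℕ) : Measurable (row n) :=
      measurable_pi_lambda _ fun k => measurable_pi_apply (Nat.pair n k)
    refine ⟨fun ξ j => φ j.unpair.1 ξ j.unpair.2, ?_, ⋃ n, Prod.map (row n) id ⁻¹' D n, ?_, ?_⟩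
    · exact measurable_pi_lambda _ fun j => (measurable_pi_apply _).comp (hφ _)
    · exact .iUnion fun n => ((h_row n).prodMap measurable_id) (hD n)
    · ext ⟨ξ, p⟩
      simp [row, ← hs]

theorem nullMeasurableSet_image_fst [StandardBorelSpace P] {m : Measure Ξ} [SFinite m]
    {B : Set (Ξ × P)} (hB : MeasurableSet B) : NullMeasurableSet (Prod.fst '' B) m := by
  obtain ⟨φ, hφ, D, hD, rfl⟩ := exists_measurable_prodMap_preimage_eq hB
  have h_image : Prod.fst '' (Prod.map φ id ⁻¹' D) = φ ⁻¹' (Prod.fst '' D) := by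
    ext ξ
    simp
  have h_analytic : AnalyticSet (Prod.fst '' D) := hD.analyticSet_image measurable_fst
  rw [h_image]
  exact (nullMeasurableSet_of_analyticSet h_analytic).preimage (hφ.quasiMeasurePreserving m)

end Projection

theorem statement1_general {Ξ X P β : Type*} [MeasurableSpace Ξ] [MeasurableSpace X]
    [MeasurableSpace P] [StandardBorelSpace P] {f : P → X} (hf : Measurable f)
    (hf_surj : Function.Surjective f) (m : Measure Ξ) [SFinite m]
    [CompleteLinearOrder β] [TopologicalSpace β] [OrderTopology β] [SecondCountableTopology β]
    [MeasurableSpace β] [BorelSpace β] {h : Ξ × X → β} (hh : Measurable h) :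
    NullMeasurable (fun ξ => ⨅ y : X, h (ξ, y)) m := by
  have h_lift : Measurable fun q : Ξ × P => h (q.1, f q.2) :=
    hh.comp (measurable_fst.prodMk (hf.comp measurable_snd))
  refine measurable_of_Iio (α := β) (δ := NullMeasurableSpace Ξ m) fun a => ?_
  have h_sublevel : (fun ξ => ⨅ y : X, h (ξ, y)) ⁻¹' Iio a =
      Prod.fst '' ((fun q : Ξ × P => h (q.1, f q.2)) ⁻¹' Iio a) := by
    ext ξ
    simp [iInf_lt_iff, hf_surj.exists]
  exact h_sublevel ▸ nullMeasurableSet_image_fst (h_lift measurableSet_Iio)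

/-- For a complete σ-finite measure space `(Ξ,𝒜,m)`, a Suslin space `X` and a jointly
measurable `h : Ξ × X → ℝ ∪ {±∞}`, the function `p(ξ) = inf_{x∈X} h(ξ,x)` is
`𝒜`-measurable. -/
theorem statement1 {Ξ X : Type*} [MeasurableSpace Ξ]
    [TopologicalSpace X] [T2Space X] [MeasurableSpace X] [BorelSpace X]
    (hX : IsSuslin X)
    (m : Measure Ξ) [SigmaFinite m] (hm : m.IsComplete)
    (h : Ξ × X → EReal) (hh : Measurable h) :
    Measurable fun ξ => ⨅ y : X, h (ξ, y) := by
  obtain ⟨P, _, _, f, hf, hf_surj⟩ := hX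
  borelize P
  exact (statement1_general hf.measurable hf_surj m hh).measurable_of_complete
end

section
/- Fix a finite horizon T > 0, a nonnegative Radon measure μ on [0,T], and a convex normal integrand h : [0,T] × ℝ^d → ℝ ∪ {±∞}. Let S_t := cl dom h_t and D(S) := {y ∈ D | y_t ∈ S_t for all t ∈ [0,T]}. Assume: (i) S_t = cl{y_t | y ∈ D(S)} for every t ∈ [0,T], and (ii) D(S) = cl(dom I_h ∩ D(S)), the closure taken in the supremum norm, where dom I_h = {y | I_h(y) < +∞}. If inf_{y∈D(S)} I_h(y) < +∞, then inf_{y∈D(S)} I_h(y) = ∫_{[0,T]} inf_{x∈ℝ^d} h_t(x) dμ(t). -/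
open MeasureTheory Filter Set Topology
open scoped ENNReal Classical

/-- Euclidean space `ℝ^d`. -/
abbrev Euc (d : ℕ) := EuclideanSpace ℝ (Fin d)

/-- A function `[0,T] → ℝ^d` (modelled on `ℝ`) is càdlàg: right-continuous on `[0,T)`
with left limits on `(0,T]`. -/
def IsCadlagOn (T : ℝ) {d : ℕ} (y : ℝ → Euc d) : Prop :=
  (∀ t ∈ Set.Ico (0:ℝ) T, Tendsto y (𝓝[>] t) (𝓝 (y t))) ∧
  (∀ t ∈ Set.Ioc (0:ℝ) T, ∃ l, Tendsto y (𝓝[<] t) (𝓝 l))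

/-- `h : [0,T] × ℝ^d → ℝ ∪ {±∞}` is a convex normal integrand: its epigraphical mapping
`t ⇒ {(x,α) | h t x ≤ α}` is closed convex-valued and measurable. -/
def IsConvexNormalIntegrand (T : ℝ) {d : ℕ} (h : ℝ → Euc d → EReal) : Prop :=
  (∀ t ∈ Set.Icc (0:ℝ) T, IsClosed {p : Euc d × ℝ | h t p.1 ≤ (p.2 : EReal)} ∧
      Convex ℝ {p : Euc d × ℝ | h t p.1 ≤ (p.2 : EReal)}) ∧
  (∀ O : Set (Euc d × ℝ), IsOpen O →
      MeasurableSet {t : ℝ | t ∈ Set.Icc (0:ℝ) T ∧ ∃ p ∈ O, h t p.1 ≤ (p.2 : EReal)})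

/-!
Only `≤` needs an argument. Right-continuity makes evaluations of `dom I_h ∩ D(S)` separable: a
countable subfamily `w n` is pointwise dense in it, so `w n t` is dense in `dom h_t` by the two
assumptions. By convexity an infimum over a dense subset of `dom h_t` is the infimum over `ℝ^d`: a
sublevel set is relatively open near a point of its relative interior, and it spans the same
affine subspace as `dom h_t`. Hence `inf_x h_t x = inf_n h_t (w n t)` for almost every `t`.

The minimum of finitely many `h_t (w n t)` is attained by a measurable pasting of the `w n`.
Finite unions of half-open intervals approximate measurable sets in measure, and pasting along them
preserves càdlàg functions, so the pasting can be made càdlàg outside a set of small measure while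
the positive part of the integrand stays below `∑ (h_t (w n t))⁺`, which is integrable. The reverse
Fatou lemma removes first the exceptional sets and then the finiteness of the minimum.
-/

/-! ### Decomposable families -/

section Decomposable

variable {α β γ : Type*}

/-- Decomposability of a family of functions: stability under pasting along the sets of `𝒞`.
Rockafellar's decomposable spaces are stable in this sense when `𝒞` consists of all measurable
sets; càdlàg functions are for `𝒞` the half-lines `Iio a`. -/
def IsDecomposable (𝒞 : Set (Set α)) (W : Set (α → β)) : Prop :=
  ∀ B ∈ 𝒞, ∀ f ∈ W, ∀ g ∈ W, B.piecewise f g ∈ W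

theorem IsDecomposable.inter {𝒞 : Set (Set α)} {W V : Set (α → β)} (hW : IsDecomposable 𝒞 W)
    (hV : IsDecomposable 𝒞 V) : IsDecomposable 𝒞 (W ∩ V) :=
  fun B hB f hf g hg ↦ ⟨hW B hB f hf.1 g hg.1, hV B hB f hf.2 g hg.2⟩

theorem isDecomposable_setOf_forall (𝒞 : Set (Set α)) (p : α → β → Prop) :
    IsDecomposable 𝒞 {f | ∀ t, p t (f t)} := by
  intro B _ f hf g hg t
  by_cases ht : t ∈ B
  · simpa only [piecewise_eq_of_mem _ _ _ ht] using hf t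
  · simpa only [piecewise_eq_of_notMem _ _ _ ht] using hg t

theorem IsDecomposable.image_superposition {𝒞 : Set (Set α)} {W : Set (α → β)}
    (hW : IsDecomposable 𝒞 W) (φ : α → β → γ) :
    IsDecomposable 𝒞 ((fun f t ↦ φ t (f t)) '' W) := by
  rintro B hB _ ⟨f, hf, rfl⟩ _ ⟨g, hg, rfl⟩
  exact ⟨B.piecewise f g, hW B hB f hf g hg, (piecewise_op B f g φ).symm⟩

theorem IsDecomposable.generateSetAlgebra {𝒞 : Set (Set α)} {W : Set (α → β)}
    (hW : IsDecomposable 𝒞 W) : IsDecomposable (generateSetAlgebra 𝒞) W := by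
  intro B hB
  induction hB with
  | base B hB => exact hW B hB
  | empty => intro f _ g hg; simpa only [piecewise_empty] using hg
  | compl B _ ih => intro f hf g hg; simpa only [piecewise_compl] using ih g hg f hf
  | union A B _ _ ihA ihB =>
    intro f hf g hg
    convert ihA f hf _ (ihB f hf g hg) using 1
    ext t
    by_cases htA : t ∈ A <;> by_cases htB : t ∈ B <;> simp [htA, htB]

variable [MeasurableSpace α] {μ : Measure α} {𝒞 : Set (Set α)} {W : Set (α → β)}

theorem isDecomposable_setOf_aemeasurable [MeasurableSpace β]
    (h𝒞 : ∀ B ∈ 𝒞, MeasurableSet B) : IsDecomposable 𝒞 {f : α → β | AEMeasurable f μ} :=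
  fun B hB _ ⟨f', hf', hff'⟩ _ ⟨g', hg', hgg'⟩ ↦
    ⟨B.piecewise f' g', hf'.piecewise (h𝒞 B hB) hg',
      (hff'.and hgg').mono fun t ht ↦ by by_cases htB : t ∈ B <;> simp [htB, ht]⟩

/-- The functions that agree with members of `W` outside sets of arbitrarily small outer measure.
Pasting along measurable sets, unlike along `𝒞`, stays inside the measure closure. -/
def measureClosure (μ : Measure α) (W : Set (α → β)) : Set (α → β) :=
  {f | ∀ ε : ℝ, 0 < ε → ∃ g ∈ W, μ {t | g t ≠ f t} < ENNReal.ofReal ε}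

theorem subset_measureClosure (μ : Measure α) (W : Set (α → β)) : W ⊆ measureClosure μ W :=
  fun f hf ε hε ↦ ⟨f, hf, by simpa using hε⟩

theorem isDecomposable_measureClosure [IsFiniteMeasure μ] (h𝒞 : μ.MeasureDense 𝒞)
    (hW : IsDecomposable 𝒞 W) :
    IsDecomposable {A | NullMeasurableSet A μ} (measureClosure μ W) := by
  intro A hA f hf g hg ε hε
  obtain ⟨f', hf'W, hf'⟩ := hf (ε / 3) (by positivity)
  obtain ⟨g', hg'W, hg'⟩ := hg (ε / 3) (by positivity)
  obtain ⟨B, hB, hAB⟩ := h𝒞.approx (toMeasurable μ A) (measurableSet_toMeasurable μ A)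
    (measure_ne_top μ _) (ε / 3) (by positivity)
  rw [measure_congr (hA.toMeasurable_ae_eq.symmDiff (ae_eq_refl B))] at hAB
  refine ⟨B.piecewise f' g', hW B hB f' hf'W g' hg'W, ?_⟩
  have hsub : {t | B.piecewise f' g' t ≠ A.piecewise f g t} ⊆
      symmDiff A B ∪ ({t | f' t ≠ f t} ∪ {t | g' t ≠ g t}) := by
    intro t ht
    by_cases htA : t ∈ A <;> by_cases htB : t ∈ B <;> simp_all [mem_symmDiff]
  calc μ {t | B.piecewise f' g' t ≠ A.piecewise f g t}
      ≤ μ (symmDiff A B) + (μ {t | f' t ≠ f t} + μ {t | g' t ≠ g t}) :=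
        (measure_mono hsub).trans <| (measure_union_le _ _).trans <|
          add_le_add_right (measure_union_le _ _) _
    _ < ENNReal.ofReal (ε / 3) + (ENNReal.ofReal (ε / 3) + ENNReal.ofReal (ε / 3)) :=
        ENNReal.add_lt_add hAB (ENNReal.add_lt_add hf' hg')
    _ = ENNReal.ofReal ε := by
        rw [← ENNReal.ofReal_add, ← ENNReal.ofReal_add] <;> first | positivity | ring_nf

theorem IsDecomposable.infClosed_measureClosure [LinearOrder β] [TopologicalSpace β]
    [OrderClosedTopology β] [SecondCountableTopology β] [MeasurableSpace β] [BorelSpace β]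
    [IsFiniteMeasure μ] (h𝒞 : μ.MeasureDense 𝒞) (hW : IsDecomposable 𝒞 W) :
    InfClosed (measureClosure μ W ∩ {f | AEMeasurable f μ}) := by
  rintro f ⟨hf, hfm⟩ g ⟨hg, hgm⟩
  refine ⟨?_, hfm.inf hgm⟩
  convert isDecomposable_measureClosure h𝒞 hW _ (nullMeasurableSet_lt hfm hgm) f hf g hg using 1
  ext t
  by_cases ht : f t < g t
  · exact (inf_of_le_left ht.le).trans (if_pos ht).symm
  · exact (inf_of_le_right (not_lt.1 ht)).trans (if_neg ht).symm

theorem exists_seq_ae_eventually_eq_of_mem_measureClosure {f : α → β}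
    (hf : f ∈ measureClosure μ W) :
    ∃ F : ℕ → α → β, (∀ n, F n ∈ W) ∧ ∀ᵐ t ∂μ, ∀ᶠ n in atTop, F n t = f t := by
  choose F hFW hF using fun n : ℕ ↦ hf ((1 / 2) ^ n) (by positivity)
  have hsum : ∑' n, μ {t | F n t ≠ f t} ≠ ∞ :=
    ne_top_of_le_ne_top (summable_geometric_two.tsum_ofReal_ne_top)
      (ENNReal.tsum_le_tsum fun n ↦ (hF n).le)
  refine ⟨F, hFW, (ae_eventually_notMem hsum).mono fun t ht ↦ ht.mono fun n hn ↦ ?_⟩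
  exact not_not.1 hn

theorem measureDense_generateSetAlgebra_range_Iio [LinearOrder α] [TopologicalSpace α]
    [OrderTopology α] [SecondCountableTopology α] [BorelSpace α] [IsFiniteMeasure μ] :
    μ.MeasureDense (generateSetAlgebra (range (Iio : α → Set α))) :=
  .of_generateFrom_isSetAlgebra_finite μ isSetAlgebra_generateSetAlgebra <| by
    rw [generateFrom_generateSetAlgebra_eq, BorelSpace.measurable_eq (α := α),
      borel_eq_generateFrom_Iio]

end Decomposable

/-! ### The extended-real-valued integral -/

theorem erealPos_eq_toENNReal_s2 (a : EReal) : erealPos a = a.toENNReal := by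
  unfold erealPos EReal.toENNReal
  congr

section EIntegral

variable {α : Type*} [MeasurableSpace α] {μ : Measure α}

theorem eIntegral_eq_top {f : α → EReal} (hf : ∫⁻ t, (f t).toENNReal ∂μ = ⊤) :
    eIntegral μ f = ⊤ := by
  simp only [eIntegral, erealPos_eq_toENNReal_s2, if_pos hf]

theorem eIntegral_eq_sub {f : α → EReal} (hf : ∫⁻ t, (f t).toENNReal ∂μ ≠ ⊤) :
    eIntegral μ f =
      ((∫⁻ t, (f t).toENNReal ∂μ : ℝ≥0∞) : EReal) - (∫⁻ t, (-f t).toENNReal ∂μ : ℝ≥0∞) := by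
  simp only [eIntegral, erealPos_eq_toENNReal_s2, if_neg hf]

theorem lintegral_toENNReal_ne_top_of_eIntegral_lt_top {f : α → EReal}
    (hf : eIntegral μ f < ⊤) : ∫⁻ t, (f t).toENNReal ∂μ ≠ ⊤ :=
  fun htop ↦ hf.ne (eIntegral_eq_top htop)

theorem ae_lt_top_of_eIntegral_lt_top {f : α → EReal} (hfm : AEMeasurable f μ)
    (hf : eIntegral μ f < ⊤) : ∀ᵐ t ∂μ, f t < ⊤ :=
  (ae_lt_top' hfm.ereal_toENNReal (lintegral_toENNReal_ne_top_of_eIntegral_lt_top hf)).mono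
    fun _ ht ↦ lt_top_iff_ne_top.2 (EReal.toENNReal_ne_top_iff.1 ht.ne)

theorem eIntegral_congr_ae {f g : α → EReal} (hfg : f =ᵐ[μ] g) :
    eIntegral μ f = eIntegral μ g := by
  have hpos : ∫⁻ t, erealPos (f t) ∂μ = ∫⁻ t, erealPos (g t) ∂μ :=
    lintegral_congr_ae (hfg.fun_comp erealPos)
  have hneg : ∫⁻ t, erealPos (-f t) ∂μ = ∫⁻ t, erealPos (-g t) ∂μ :=
    lintegral_congr_ae (hfg.fun_comp fun a ↦ erealPos (-a))
  simp only [eIntegral, hpos, hneg]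

theorem limsup_eIntegral_le {F : ℕ → α → EReal} {g : α → EReal} {Φ : α → ℝ≥0∞}
    (hF : ∀ n, AEMeasurable (F n) μ) (hΦ : ∫⁻ t, Φ t ∂μ ≠ ⊤)
    (hFΦ : ∀ n, ∀ᵐ t ∂μ, (F n t).toENNReal ≤ Φ t)
    (hlim : ∀ᵐ t ∂μ, Tendsto (fun n ↦ F n t) atTop (𝓝 (g t))) :
    limsup (fun n ↦ eIntegral μ (F n)) atTop ≤ eIntegral μ g := by
  set P : ℕ → ℝ≥0∞ := fun n ↦ ∫⁻ t, (F n t).toENNReal ∂μ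
  set N : ℕ → ℝ≥0∞ := fun n ↦ ∫⁻ t, (-F n t).toENNReal ∂μ
  have hP : ∀ n, P n ≤ ∫⁻ t, Φ t ∂μ := fun n ↦ lintegral_mono_ae (hFΦ n)
  have hPlim : Tendsto P atTop (𝓝 (∫⁻ t, (g t).toENNReal ∂μ)) :=
    tendsto_lintegral_of_dominated_convergence' Φ (fun n ↦ (hF n).ereal_toENNReal) hFΦ hΦ
      (hlim.mono fun t ht ↦ (EReal.continuous_toENNReal.tendsto _).comp ht)
  have hg : ∫⁻ t, (g t).toENNReal ∂μ ≠ ⊤ :=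
    ne_top_of_le_ne_top hΦ (le_of_tendsto' hPlim hP)
  have hNlim : ∫⁻ t, (-g t).toENNReal ∂μ ≤ liminf N atTop := by
    refine (lintegral_congr_ae (hlim.mono fun t ht ↦ ?_)).trans_le
      (lintegral_liminf_le' fun n ↦ (hF n).neg.ereal_toENNReal)
    exact ((EReal.continuous_toENNReal.comp continuous_neg).tendsto _ |>.comp ht).liminf_eq.symm
  have hPcoe : limsup (fun n ↦ (P n : EReal)) atTop = (∫⁻ t, (g t).toENNReal ∂μ : ℝ≥0∞) :=
    ((continuous_coe_ennreal_ereal.tendsto _).comp hPlim).limsup_eq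
  have hNcoe : ((∫⁻ t, (-g t).toENNReal ∂μ : ℝ≥0∞) : EReal) ≤
      liminf (fun n ↦ (N n : EReal)) atTop := by
    refine (EReal.coe_ennreal_le_coe_ennreal_iff.2 hNlim).trans_eq ?_
    exact EReal.coe_ennreal_strictMono.monotone.map_liminf_of_continuousAt N
      continuous_coe_ennreal_ereal.continuousAt
  calc limsup (fun n ↦ eIntegral μ (F n)) atTop
      = limsup ((fun n ↦ (P n : EReal)) + -fun n ↦ (N n : EReal)) atTop := by
        congr 1 with n
        exact eIntegral_eq_sub (ne_top_of_le_ne_top hΦ (hP n))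
    _ ≤ limsup (fun n ↦ (P n : EReal)) atTop + limsup (-fun n ↦ (N n : EReal)) atTop :=
        EReal.limsup_add_le (.inl (by simp [hPcoe])) (.inl (by simpa [hPcoe] using hg))
    _ ≤ eIntegral μ g := by
        rw [eIntegral_eq_sub hg, hPcoe, EReal.limsup_neg]
        exact EReal.sub_le_sub le_rfl hNcoe

end EIntegral

section Interchange

variable {α : Type*} [MeasurableSpace α] {μ : Measure α} {𝒞 : Set (Set α)} {W : Set (α → EReal)}

theorem iInf_eIntegral_le_of_mem_measureClosure {g : α → EReal} {Φ : α → ℝ≥0∞}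
    (hWm : ∀ F ∈ W, AEMeasurable F μ) (hWΦ : ∀ F ∈ W, ∀ t, (F t).toENNReal ≤ Φ t)
    (hΦ : ∫⁻ t, Φ t ∂μ ≠ ⊤) (hg : g ∈ measureClosure μ W) :
    ⨅ F ∈ W, eIntegral μ F ≤ eIntegral μ g := by
  obtain ⟨F, hFW, hFg⟩ := exists_seq_ae_eventually_eq_of_mem_measureClosure hg
  calc ⨅ F ∈ W, eIntegral μ F
      ≤ limsup (fun n ↦ eIntegral μ (F n)) atTop :=
        le_limsup_of_frequently_le (.of_forall fun n ↦ iInf₂_le (F n) (hFW n))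
    _ ≤ eIntegral μ g :=
        limsup_eIntegral_le (fun n ↦ hWm _ (hFW n)) hΦ (fun n ↦ .of_forall (hWΦ _ (hFW n)))
          (hFg.mono fun _ ht ↦ tendsto_nhds_of_eventually_eq ht)

theorem IsDecomposable.iInf_eIntegral_le_eIntegral_inf' [IsFiniteMeasure μ]
    (h𝒞 : μ.MeasureDense 𝒞) (hW : IsDecomposable 𝒞 W) {ι : Type*} {s : Finset ι}
    (hs : s.Nonempty) {f : ι → α → EReal} (hfW : ∀ i ∈ s, f i ∈ W)
    (hfm : ∀ i ∈ s, AEMeasurable (f i) μ) (hf : ∀ i ∈ s, ∫⁻ t, (f i t).toENNReal ∂μ ≠ ⊤) :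
    ⨅ F ∈ W, eIntegral μ F ≤ eIntegral μ (s.inf' hs f) := by
  set Φ : α → ℝ≥0∞ := fun t ↦ ∑ i ∈ s, (f i t).toENNReal
  have hΦ : ∫⁻ t, Φ t ∂μ ≠ ⊤ := by
    rw [lintegral_finsetSum' s fun i hi ↦ (hfm i hi).ereal_toENNReal]
    exact ENNReal.sum_ne_top.2 hf
  set W' : Set (α → EReal) :=
    W ∩ ({F | AEMeasurable F μ} ∩ {F | ∀ t, (F t).toENNReal ≤ Φ t})
  have hW' : IsDecomposable 𝒞 W' := hW.inter <|
    (isDecomposable_setOf_aemeasurable h𝒞.measurable).inter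
      (isDecomposable_setOf_forall 𝒞 fun t (a : EReal) ↦ a.toENNReal ≤ Φ t)
  have hfW' : ∀ i ∈ s, f i ∈ W' := fun i hi ↦ ⟨hfW i hi, hfm i hi, fun t ↦
    Finset.single_le_sum (f := fun i ↦ (f i t).toENNReal) (fun _ _ ↦ zero_le) hi⟩
  have hmem : s.inf' hs f ∈ measureClosure μ W' ∩ {F | AEMeasurable F μ} :=
    (hW'.infClosed_measureClosure h𝒞).finsetInf'_mem hs fun i hi ↦
      ⟨subset_measureClosure μ W' (hfW' i hi), hfm i hi⟩
  calc ⨅ F ∈ W, eIntegral μ F ≤ ⨅ F ∈ W', eIntegral μ F := biInf_mono inter_subset_left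
    _ ≤ eIntegral μ (s.inf' hs f) :=
      iInf_eIntegral_le_of_mem_measureClosure (fun F hF ↦ hF.2.1) (fun F hF ↦ hF.2.2) hΦ hmem.1

theorem IsDecomposable.iInf_eIntegral_le_eIntegral_iInf [IsFiniteMeasure μ]
    (h𝒞 : μ.MeasureDense 𝒞) (hW : IsDecomposable 𝒞 W) {f : ℕ → α → EReal} (hfW : ∀ n, f n ∈ W)
    (hfm : ∀ n, AEMeasurable (f n) μ) (hf : ∀ n, ∫⁻ t, (f n t).toENNReal ∂μ ≠ ⊤) :
    ⨅ F ∈ W, eIntegral μ F ≤ eIntegral μ fun t ↦ ⨅ n, f n t := by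
  have hrange : ∀ n, (Finset.range (n + 1)).Nonempty := fun _ ↦ Finset.nonempty_range_add_one
  set g : ℕ → α → EReal := fun n ↦ (Finset.range (n + 1)).inf' (hrange n) f
  have hgm : ∀ n, AEMeasurable (g n) μ := fun n ↦
    Finset.inf'_induction (p := (AEMeasurable · μ)) (hrange n) f
      (fun _ hu _ hv ↦ hu.inf hv) fun i _ ↦ hfm i
  have hg_anti : Antitone g := fun m n hmn ↦
    Finset.inf'_mono f (Finset.range_mono (Nat.succ_le_succ hmn)) (hrange m)
  have hg_le : ∀ n, g n ≤ f n := fun n ↦ Finset.inf'_le f (Finset.self_mem_range_succ n)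
  have hg_lim : ∀ t, Tendsto (fun n ↦ g n t) atTop (𝓝 (⨅ n, f n t)) := fun t ↦ by
    have hiInf : ⨅ n, f n t = ⨅ n, g n t := le_antisymm
      (le_iInf fun n ↦ by
        simp only [g, Finset.inf'_apply, Finset.le_inf'_iff]
        exact fun i _ ↦ iInf_le _ i)
      (iInf_mono fun n ↦ hg_le n t)
    exact hiInf ▸ tendsto_atTop_iInf fun m n hmn ↦ hg_anti hmn t
  calc ⨅ F ∈ W, eIntegral μ F
      ≤ limsup (fun n ↦ eIntegral μ (g n)) atTop :=
        le_limsup_of_frequently_le (.of_forall fun n ↦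
          hW.iInf_eIntegral_le_eIntegral_inf' h𝒞 (hrange n) (fun i _ ↦ hfW i) (fun i _ ↦ hfm i)
            fun i _ ↦ hf i)
    _ ≤ eIntegral μ fun t ↦ ⨅ n, f n t :=
        limsup_eIntegral_le (Φ := fun t ↦ (f 0 t).toENNReal) hgm (hf 0)
          (fun n ↦ .of_forall fun t ↦ EReal.toENNReal_le_toENNReal
            ((hg_anti (Nat.zero_le n) t).trans (hg_le 0 t)))
          (.of_forall hg_lim)

end Interchange

/-! ### Right-continuous functions -/

section RightContinuous

variable {α E ι : Type*} [LinearOrder α] [TopologicalSpace α] [OrderTopology α]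
  [SecondCountableTopology α] [TopologicalSpace E]

/-- The Lindelöf argument for the Sorgenfrey line: the points of `U` missed by the interiors of
the `N t` are left endpoints of pairwise disjoint open intervals, hence countably many. -/
theorem exists_countable_cover_nhdsGE {U : Set α} {N : α → Set α} (hN : ∀ t ∈ U, N t ∈ 𝓝[≥] t) :
    ∃ I ⊆ U, I.Countable ∧ U ⊆ ⋃ t ∈ I, N t := by
  obtain ⟨J, hJU, hJ, hJN⟩ :=
    TopologicalSpace.isOpen_biUnion_countable U (fun t ↦ interior (N t)) fun _ _ ↦ isOpen_interior
  set V := ⋃ t ∈ U, interior (N t)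
  have hIoo : ∀ t ∈ (U \ V) \ {t | IsMax t}, ∃ b, t < b ∧ Ioo t b ⊆ V := by
    rintro t ⟨⟨htU, -⟩, htmax⟩
    obtain ⟨c, hc⟩ := not_isMax_iff.1 htmax
    obtain ⟨b, hb, hbN⟩ := (mem_nhdsGE_iff_exists_mem_Ioc_Ico_subset hc).1 (hN t htU)
    have hbN' : Ioo t b ⊆ interior (N t) :=
      interior_maximal (Ioo_subset_Ico_self.trans hbN) isOpen_Ioo
    exact ⟨b, hb.1, hbN'.trans (subset_biUnion_of_mem (u := fun t ↦ interior (N t)) htU)⟩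
  choose! b hb hbV using hIoo
  have hdisj : PairwiseDisjoint ((U \ V) \ {t | IsMax t}) fun t ↦ Ioo t (b t) := by
    intro s hs t ht hst
    wlog hlt : s < t generalizing s t
    · exact (this ht hs hst.symm (lt_of_le_of_ne (not_lt.1 hlt) hst.symm)).symm
    have hbt : b s ≤ t := not_lt.1 fun h ↦ ht.1.2 (hbV s hs ⟨hlt, h⟩)
    exact disjoint_left.2 fun u hus hut ↦ (hus.2.trans_le hbt).not_gt hut.1
  have hmax : {t : α | IsMax t}.Subsingleton := fun s hs t ht ↦
    le_antisymm (ht.isTop s) (hs.isTop t)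
  have hrest : (U \ V).Countable := (hdisj.countable_of_Ioo hb).of_sdiff hmax.countable
  refine ⟨J ∪ U \ V, union_subset hJU sdiff_subset, hJ.union hrest, fun t ht ↦ ?_⟩
  by_cases htV : t ∈ V
  · rw [← hJN] at htV
    exact biUnion_mono subset_union_left (fun _ _ ↦ interior_subset) htV
  · exact mem_biUnion (Or.inr ⟨ht, htV⟩) (mem_of_mem_nhdsWithin self_mem_Ici (hN t ht))

theorem measurable_of_continuousWithinAt_Ioi [MeasurableSpace α] [BorelSpace α]
    [MeasurableSpace E] [BorelSpace E] {y : α → E}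
    (hy : ∀ t, ContinuousWithinAt y (Ioi t) t) : Measurable y :=
  measurable_of_isOpen fun _ hO ↦
    .of_mem_nhdsGT fun t ht ↦ (hy t).preimage_mem_nhdsWithin (hO.mem_nhds ht)

theorem exists_countable_eval_dense [SecondCountableTopology E] {y : ι → α → E}
    (hy : ∀ i t, ContinuousWithinAt (y i) (Ioi t) t) :
    ∃ J : Set ι, J.Countable ∧ ∀ i t, y i t ∈ closure ((fun j ↦ y j t) '' J) := by
  have hOpen : ∀ O : Set E, IsOpen O →
      ∃ J : Set ι, J.Countable ∧ ∀ i t, y i t ∈ O → ∃ j ∈ J, y j t ∈ O := by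
    intro O hO
    have hU : ∀ t ∈ {t | ∃ i, y i t ∈ O}, ∃ i, y i ⁻¹' O ∈ 𝓝[≥] t := fun t ⟨i, hi⟩ ↦
      ⟨i, (continuousWithinAt_Ioi_iff_Ici.1 (hy i t)).preimage_mem_nhdsWithin (hO.mem_nhds hi)⟩
    rcases isEmpty_or_nonempty ι with _ | _
    · exact ⟨∅, countable_empty, fun i ↦ isEmptyElim i⟩
    choose! i hi using hU
    obtain ⟨I, -, hI, hcover⟩ := exists_countable_cover_nhdsGE hi
    refine ⟨i '' I, hI.image i, fun j t hjt ↦ ?_⟩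
    obtain ⟨s, hs, hts⟩ := mem_iUnion₂.1 (hcover ⟨j, hjt⟩)
    exact ⟨i s, mem_image_of_mem i hs, hts⟩
  choose! J hJ hJO using hOpen
  have hB := TopologicalSpace.isBasis_countableBasis E
  refine ⟨⋃ O ∈ TopologicalSpace.countableBasis E, J O,
    (TopologicalSpace.countable_countableBasis E).biUnion fun O hO ↦ hJ O (hB.isOpen hO),
    fun i t ↦ hB.mem_closure_iff.2 fun O hO hiO ↦ ?_⟩
  obtain ⟨j, hj, hjO⟩ := hJO O (hB.isOpen hO) i t hiO
  exact ⟨y j t, hjO, mem_image_of_mem _ (mem_biUnion hO hj)⟩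

end RightContinuous

section Cadlag

variable {T : ℝ} {d : ℕ}

theorem IsCadlagOn.continuousWithinAt_domRestrict {y : ℝ → Euc d} (hy : IsCadlagOn T y)
    (t : Icc (0 : ℝ) T) : ContinuousWithinAt ((Icc 0 T).domRestrict y) (Ioi t) t := by
  rcases t.2.2.lt_or_eq with htT | htT
  · exact (hy.1 t ⟨t.2.1, htT⟩).comp
      (continuous_subtype_val.continuousWithinAt.tendsto_nhdsWithin fun s hs ↦ hs)
  · have hempty : Ioi t = ∅ := eq_empty_of_forall_notMem fun s hs ↦
      (s.2.2.trans_eq htT.symm).not_gt hs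
    simp only [hempty, ContinuousWithinAt, nhdsWithin_empty, tendsto_bot]

theorem IsCadlagOn.piecewise_Iio {y z : ℝ → Euc d} (hy : IsCadlagOn T y) (hz : IsCadlagOn T z)
    (a : ℝ) : IsCadlagOn T ((Iio a).piecewise y z) := by
  refine ⟨fun t ht ↦ ?_, fun t ht ↦ ?_⟩
  · rcases lt_or_ge t a with hta | hat
    · rw [piecewise_eq_of_mem _ _ _ (mem_Iio.2 hta)]
      refine (hy.1 t ht).congr' ?_
      filter_upwards [mem_nhdsWithin_of_mem_nhds (Iio_mem_nhds hta)] with s hs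
      exact (piecewise_eq_of_mem _ _ _ hs).symm
    · rw [piecewise_eq_of_notMem _ _ _ (notMem_Iio.2 hat)]
      refine (hz.1 t ht).congr' ?_
      filter_upwards [self_mem_nhdsWithin] with s hs
      exact (piecewise_eq_of_notMem _ _ _ (notMem_Iio.2 (hat.trans (le_of_lt hs)))).symm
  · rcases le_or_gt t a with hta | hat
    · refine (hy.2 t ht).imp fun l hl ↦ hl.congr' ?_
      filter_upwards [self_mem_nhdsWithin] with s hs
      exact (piecewise_eq_of_mem (Iio a) y z (mem_Iio.2 (lt_of_lt_of_le hs hta))).symm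
    · refine (hz.2 t ht).imp fun l hl ↦ hl.congr' ?_
      filter_upwards [mem_nhdsWithin_of_mem_nhds (Ioi_mem_nhds hat)] with s hs
      exact (piecewise_eq_of_notMem _ _ _ (notMem_Iio.2 (le_of_lt hs))).symm

theorem isDecomposable_setOf_isCadlagOn_and_mem (S : ℝ → Set (Euc d)) :
    IsDecomposable (range Iio) {y | IsCadlagOn T y ∧ ∀ t ∈ Icc 0 T, y t ∈ S t} := by
  have hcadlag : IsDecomposable (range Iio) {y : ℝ → Euc d | IsCadlagOn T y} := by
    rintro _ ⟨a, rfl⟩ y hy z hz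
    exact hy.piecewise_Iio hz a
  exact hcadlag.inter (isDecomposable_setOf_forall _ fun t v ↦ t ∈ Icc 0 T → v ∈ S t)

theorem exists_seq_eval_dense_of_isCadlagOn {D : Set (ℝ → Euc d)} (hD : ∀ y ∈ D, IsCadlagOn T y)
    (hne : D.Nonempty) :
    ∃ w : ℕ → ℝ → Euc d, (∀ n, w n ∈ D) ∧
      ∀ t ∈ Icc 0 T, (fun y ↦ y t) '' D ⊆ closure (range fun n ↦ w n t) := by
  obtain ⟨J, hJ, hdense⟩ := exists_countable_eval_dense
    (y := fun y : D ↦ (Icc 0 T).domRestrict y.1) fun y ↦ (hD y y.2).continuousWithinAt_domRestrict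
  -- Adding one element makes the family nonempty even when `[0,T]` is empty.
  obtain ⟨y₀, hy₀⟩ := hne
  obtain ⟨w, hw⟩ := (hJ.insert ⟨y₀, hy₀⟩).exists_eq_range (insert_nonempty _ _)
  refine ⟨fun n ↦ w n, fun n ↦ (w n).2, ?_⟩
  rintro t ht _ ⟨y, hy, rfl⟩
  refine closure_mono ?_ (hdense ⟨y, hy⟩ ⟨t, ht⟩)
  rintro _ ⟨j, hj, rfl⟩
  obtain ⟨n, rfl⟩ := hw ▸ mem_insert_of_mem _ hj
  exact mem_range_self n

end Cadlag

/-! ### Infima of convex functions over dense subsets of the domain -/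

section ConvexInfimum

variable {E : Type*} [AddCommGroup E] [Module ℝ E] {H : E → EReal}

theorem convex_setOf_lt_of_convex_epigraph
    (hH : Convex ℝ {p : E × ℝ | H p.1 ≤ (p.2 : EReal)}) (a : EReal) : Convex ℝ {x | H x < a} := by
  intro x hx y hy b c hb hc hbc
  obtain ⟨r, hxr, hra⟩ := EReal.lt_iff_exists_real_btwn.1 hx
  obtain ⟨s, hys, hsa⟩ := EReal.lt_iff_exists_real_btwn.1 hy
  calc H (b • x + c • y)
      ≤ (b • r + c • s : ℝ) := hH (x := (x, r)) hxr.le (y := (y, s)) hys.le hb hc hbc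
    _ ≤ (max r s : ℝ) := EReal.coe_le_coe (Convex.combo_le_max r s hb hc hbc)
    _ < a := by rcases max_choice r s with h | h <;> rwa [h]

theorem dom_subset_affineSpan_setOf_lt
    (hH : Convex ℝ {p : E × ℝ | H p.1 ≤ (p.2 : EReal)}) {a : EReal} {x : E} (hx : H x < a) :
    {v | H v < ⊤} ⊆ affineSpan ℝ {v | H v < a} := by
  intro v hv
  obtain ⟨r, hxr, hra⟩ := EReal.lt_iff_exists_real_btwn.1 hx
  obtain ⟨s, hvs, -⟩ := EReal.lt_iff_exists_real_btwn.1 hv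
  -- For small `l > 0` the point `x + l (v - x)` is still in the sublevel set.
  have hlim : Tendsto (fun l : ℝ ↦ (((1 - l) * r + l * s : ℝ) : EReal)) (𝓝[>] 0) (𝓝 r) := by
    have hcont : Continuous fun l : ℝ ↦ (((1 - l) * r + l * s : ℝ) : EReal) :=
      continuous_coe_real_ereal.comp (by fun_prop)
    exact (hcont.tendsto' 0 r (by simp)).mono_left nhdsWithin_le_nhds
  obtain ⟨l, hla, hl0, hl1⟩ :=
    ((hlim.eventually_lt_const hra).and (Ioo_mem_nhdsGT (zero_lt_one' ℝ))).exists
  have hmem : AffineMap.lineMap x v l ∈ {v | H v < a} := by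
    rw [AffineMap.lineMap_apply_module]
    exact (hH (x := (x, r)) hxr.le (y := (v, s)) hvs.le (sub_nonneg.2 hl1.le) hl0.le
      (sub_add_cancel 1 l)).trans_lt hla
  have hv_eq : AffineMap.lineMap x (AffineMap.lineMap x v l) l⁻¹ = v := by
    rw [AffineMap.lineMap_lineMap_right, inv_mul_cancel₀ hl0.ne', AffineMap.lineMap_apply_one]
  exact hv_eq ▸ AffineMap.lineMap_mem _ (subset_affineSpan ℝ _ hx) (subset_affineSpan ℝ _ hmem)

end ConvexInfimum

section ConvexInfimumFiniteDimensional

variable {E : Type*} [NormedAddCommGroup E] [NormedSpace ℝ E] [FiniteDimensional ℝ E]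

theorem exists_isOpen_inter_affineSpan_subset {C : Set E} (hC : Convex ℝ C) (hne : C.Nonempty) :
    ∃ O, IsOpen O ∧ (O ∩ C).Nonempty ∧ O ∩ affineSpan ℝ C ⊆ C := by
  obtain ⟨x, z, hz, -⟩ := hne.intrinsicInterior hC
  obtain ⟨V, hVC, ⟨O, hO, rfl⟩, hzO⟩ := mem_interior.1 hz
  exact ⟨O, hO, ⟨z, hzO, hVC hzO⟩, fun v ⟨hvO, hv⟩ ↦ hVC (a := ⟨v, hv⟩) hvO⟩

theorem biInf_eq_iInf_of_dom_subset_closure {H : E → EReal}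
    (hH : Convex ℝ {p : E × ℝ | H p.1 ≤ (p.2 : EReal)}) {D : Set E} (hD : ∀ x ∈ D, H x < ⊤)
    (hdense : {x | H x < ⊤} ⊆ closure D) : ⨅ x ∈ D, H x = ⨅ x, H x := by
  refine le_antisymm (le_of_forall_gt fun a ha ↦ ?_) (le_iInf₂ fun x _ ↦ iInf_le H x)
  obtain ⟨x, hx⟩ := iInf_lt_iff.1 ha
  obtain ⟨O, hO, ⟨y, hyO, hy⟩, hOsub⟩ :=
    exists_isOpen_inter_affineSpan_subset (convex_setOf_lt_of_convex_epigraph hH a) ⟨x, hx⟩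
  have hydom : H y < ⊤ := lt_of_lt_of_le hy le_top
  obtain ⟨p, hpO, hpD⟩ := mem_closure_iff.1 (hdense hydom) O hO hyO
  exact (iInf₂_le p hpD).trans_lt
    (hOsub ⟨hpO, dom_subset_affineSpan_setOf_lt hH hx (hD p hpD)⟩)

end ConvexInfimumFiniteDimensional

/-! ### Measurability of compositions with a normal integrand -/

section NormalIntegrand

theorem measurableSet_mem_of_isClosed {α X : Type*} [MeasurableSpace α] [TopologicalSpace X]
    [SecondCountableTopology X] [MeasurableSpace X] [OpensMeasurableSpace X] {F : α → Set X}
    (hclosed : ∀ t, IsClosed (F t))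
    (hmeas : ∀ O, IsOpen O → MeasurableSet {t | (F t ∩ O).Nonempty})
    {x : α → X} (hx : Measurable x) : MeasurableSet {t | x t ∈ F t} := by
  have hB := TopologicalSpace.isBasis_countableBasis X
  have hmem : {t | x t ∈ F t} = ⋂ O ∈ TopologicalSpace.countableBasis X,
      {t | x t ∈ O → (F t ∩ O).Nonempty} := by
    ext t
    rw [mem_ofPred_eq, ← (hclosed t).closure_eq, hB.mem_closure_iff]
    simp only [mem_iInter, mem_ofPred_eq, inter_comm]
  rw [hmem]
  refine .biInter (TopologicalSpace.countable_countableBasis X) fun O hO ↦ ?_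
  have hO := hB.isOpen hO
  exact (hx hO.measurableSet).imp (hmeas O hO)

theorem measurable_comp_of_epigraph {α X : Type*} [MeasurableSpace α] [TopologicalSpace X]
    [SecondCountableTopology X] [MeasurableSpace X] [OpensMeasurableSpace X] {H : α → X → EReal}
    (hclosed : ∀ t, IsClosed {p : X × ℝ | H t p.1 ≤ (p.2 : EReal)})
    (hmeas : ∀ O : Set (X × ℝ), IsOpen O →
      MeasurableSet {t | ({p : X × ℝ | H t p.1 ≤ (p.2 : EReal)} ∩ O).Nonempty})
    {x : α → X} (hx : Measurable x) : Measurable fun t ↦ H t (x t) := by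
  refine measurable_of_Iio fun a ↦ ?_
  have hle : ∀ q : ℚ, MeasurableSet {t | H t (x t) ≤ ((q : ℝ) : EReal)} := fun q ↦
    measurableSet_mem_of_isClosed hclosed hmeas (hx.prodMk (measurable_const (a := (q : ℝ))))
  have hlt : (fun t ↦ H t (x t)) ⁻¹' Iio a =
      ⋃ (q : ℚ) (_ : ((q : ℝ) : EReal) < a), {t | H t (x t) ≤ ((q : ℝ) : EReal)} := by
    ext t
    simp only [mem_preimage, mem_Iio, mem_iUnion, mem_ofPred_eq, exists_prop]
    refine ⟨fun ht ↦ ?_, fun ⟨q, hqa, hq⟩ ↦ hq.trans_lt hqa⟩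
    obtain ⟨q, hq, hqa⟩ := EReal.lt_iff_exists_rat_btwn.1 ht
    exact ⟨q, hqa, hq.le⟩
  rw [hlt]
  exact .iUnion fun q ↦ .iUnion fun _ ↦ hle q

variable {T : ℝ} {d : ℕ}

theorem IsConvexNormalIntegrand.measurable_comp {h : ℝ → Euc d → EReal}
    (hh : IsConvexNormalIntegrand T h) {y : Icc (0 : ℝ) T → Euc d} (hy : Measurable y) :
    Measurable fun t : Icc (0 : ℝ) T ↦ h t (y t) := by
  refine measurable_comp_of_epigraph (H := fun t : Icc (0 : ℝ) T ↦ h t) (fun t ↦ (hh.1 t t.2).1)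
    (fun O hO ↦ ?_) hy
  convert measurable_subtype_coe (hh.2 O hO) using 1
  ext t
  simp [Set.Nonempty, and_comm, t.2.1, t.2.2]

theorem IsConvexNormalIntegrand.aemeasurable_comp {μ : Measure ℝ} (hμ : μ (Icc 0 T)ᶜ = 0)
    {h : ℝ → Euc d → EReal} (hh : IsConvexNormalIntegrand T h) {y : ℝ → Euc d}
    (hy : IsCadlagOn T y) : AEMeasurable (fun t ↦ h t (y t)) μ := by
  rw [← Measure.restrict_eq_self_of_ae_mem (mem_ae_iff.2 hμ : ∀ᵐ t ∂μ, t ∈ Icc 0 T)]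
  exact aemeasurable_restrict_of_measurable_subtype measurableSet_Icc <|
    hh.measurable_comp (measurable_of_continuousWithinAt_Ioi hy.continuousWithinAt_domRestrict)

end NormalIntegrand

/-! ### The interchange rule -/

theorem closure_image_eval_subset_of_approx {α X : Type*} [PseudoMetricSpace X] {t : α}
    {D D' : Set (α → X)} (h : ∀ y ∈ D, ∀ ε > (0 : ℝ), ∃ z ∈ D', dist (z t) (y t) ≤ ε) :
    closure ((fun y ↦ y t) '' D) ⊆ closure ((fun z ↦ z t) '' D') := by
  refine closure_minimal ?_ isClosed_closure
  rintro _ ⟨y, hy, rfl⟩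
  refine Metric.mem_closure_iff.2 fun ε hε ↦ ?_
  obtain ⟨z, hz, hzy⟩ := h y hy (ε / 2) (half_pos hε)
  exact ⟨z t, mem_image_of_mem _ hz, (dist_comm _ _).trans_lt (hzy.trans_lt (half_lt_self hε))⟩

theorem ae_iInf_eq_iInf_of_dense {T : ℝ} {d : ℕ} {μ : Measure ℝ} (hμc : μ (Icc 0 T)ᶜ = 0)
    {h : ℝ → Euc d → EReal} (hh : IsConvexNormalIntegrand T h) {w : ℕ → ℝ → Euc d}
    (hw : ∀ n, IsCadlagOn T (w n)) (hwI : ∀ n, eIntegral μ (fun t ↦ h t (w n t)) < ⊤)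
    (hdense : ∀ᵐ t ∂μ, {x | h t x < ⊤} ⊆ closure (range fun n ↦ w n t)) :
    (fun t ↦ ⨅ n, h t (w n t)) =ᵐ[μ] fun t ↦ ⨅ x, h t x := by
  have hfinite : ∀ᵐ t ∂μ, ∀ n, h t (w n t) < ⊤ := ae_all_iff.2 fun n ↦
    ae_lt_top_of_eIntegral_lt_top (hh.aemeasurable_comp hμc (hw n)) (hwI n)
  filter_upwards [mem_ae_iff.2 hμc, hfinite, hdense] with t ht hwt hdt
  rw [← biInf_eq_iInf_of_dom_subset_closure (hh.1 t ht).2 (forall_mem_range.2 hwt) hdt, iInf_range]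

theorem statement2_general {d : ℕ} (T : ℝ) (μ : Measure ℝ) [IsFiniteMeasure μ]
    (hμc : μ (Icc 0 T)ᶜ = 0) (h : ℝ → Euc d → EReal) (hh : IsConvexNormalIntegrand T h)
    (DS : Set (ℝ → Euc d)) (hcadlag : ∀ y ∈ DS, IsCadlagOn T y)
    (hpaste : IsDecomposable (range Iio) DS)
    (hdense : ∀ᵐ t ∂μ, {x | h t x < ⊤} ⊆
      closure ((fun y ↦ y t) '' {y ∈ DS | eIntegral μ (fun s ↦ h s (y s)) < ⊤}))
    (hfin : (⨅ y ∈ DS, eIntegral μ fun t ↦ h t (y t)) < ⊤) :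
    (⨅ y ∈ DS, eIntegral μ fun t ↦ h t (y t)) = eIntegral μ fun t ↦ ⨅ x, h t x := by
  refine le_antisymm ?_ (le_iInf₂ fun y _ ↦ eIntegral_mono fun t ↦ iInf_le (h t) (y t))
  set domI := {y ∈ DS | eIntegral μ (fun t ↦ h t (y t)) < ⊤}
  have hdomI : domI.Nonempty := by
    obtain ⟨y, hyI⟩ := iInf_lt_iff.1 hfin
    obtain ⟨hy, hyI⟩ := iInf_lt_iff.1 hyI
    exact ⟨y, hy, hyI⟩
  obtain ⟨w, hw, hw_dense⟩ :=
    exists_seq_eval_dense_of_isCadlagOn (D := domI) (fun y hy ↦ hcadlag y hy.1) hdomI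
  have hw_cadlag : ∀ n, IsCadlagOn T (w n) := fun n ↦ hcadlag _ (hw n).1
  have hw_dom : ∀ᵐ t ∂μ, {x | h t x < ⊤} ⊆ closure (range fun n ↦ w n t) := by
    filter_upwards [mem_ae_iff.2 hμc, hdense] with t ht hdt
    exact hdt.trans (closure_minimal (hw_dense t ht) isClosed_closure)
  calc ⨅ y ∈ DS, eIntegral μ (fun t ↦ h t (y t))
      = ⨅ F ∈ (fun y t ↦ h t (y t)) '' DS, eIntegral μ F := iInf_image.symm
    _ ≤ eIntegral μ fun t ↦ ⨅ n, h t (w n t) :=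
        (hpaste.generateSetAlgebra.image_superposition h).iInf_eIntegral_le_eIntegral_iInf
          measureDense_generateSetAlgebra_range_Iio (fun n ↦ mem_image_of_mem _ (hw n).1)
          (fun n ↦ hh.aemeasurable_comp hμc (hw_cadlag n))
          fun n ↦ lintegral_toENNReal_ne_top_of_eIntegral_lt_top (hw n).2
    _ = eIntegral μ fun t ↦ ⨅ x, h t x :=
        eIntegral_congr_ae (ae_iInf_eq_iInf_of_dense hμc hh hw_cadlag (fun n ↦ (hw n).2) hw_dom)

/-- **Interchange rule on the space of càdlàg functions** (Theorem 3.3): under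
Assumption 3.2 (`S_t = cl{y_t | y ∈ D(S)}` and `D(S) = cl(dom I_h ∩ D(S))` in the
supremum norm), `inf_{y ∈ D(S)} I_h(y) = ∫ inf_{x∈ℝ^d} h_t(x) dμ(t)` as soon as the
left side is `< +∞`. -/
theorem statement2 {d : ℕ} (T : ℝ) (hT : 0 < T)
    (μ : Measure ℝ) [IsFiniteMeasure μ] (hμc : μ (Set.Icc (0:ℝ) T)ᶜ = 0)
    (h : ℝ → Euc d → EReal) (hh : IsConvexNormalIntegrand T h)
    (DS : Set (ℝ → Euc d))
    (hDS : DS = {y | IsCadlagOn T y ∧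
      ∀ t ∈ Set.Icc (0:ℝ) T, y t ∈ closure {x | h t x < ⊤}})
    -- Assumption 3.2 (i): `S_t = cl{y_t | y ∈ D(S)}` for all `t`
    (hS : ∀ t ∈ Set.Icc (0:ℝ) T,
      closure {x | h t x < ⊤} = closure {v | ∃ y ∈ DS, y t = v})
    -- Assumption 3.2 (ii): `D(S) = cl(dom I_h ∩ D(S))`, closure in the supremum norm
    (hcl : ∀ y : ℝ → Euc d, IsCadlagOn T y →
      (y ∈ DS ↔ ∀ ε > (0:ℝ), ∃ z ∈ DS, eIntegral μ (fun t => h t (z t)) < ⊤ ∧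
        ∀ t ∈ Set.Icc (0:ℝ) T, dist (z t) (y t) ≤ ε))
    (hfin : (⨅ y ∈ DS, eIntegral μ fun t => h t (y t)) < ⊤) :
    (⨅ y ∈ DS, eIntegral μ fun t => h t (y t)) = eIntegral μ fun t => ⨅ x : Euc d, h t x := by
  subst hDS
  refine statement2_general T μ hμc h hh _ (fun y hy ↦ hy.1)
    (isDecomposable_setOf_isCadlagOn_and_mem _) (mem_of_superset (mem_ae_iff.2 hμc) ?_) hfin
  exact fun t ht ↦ (subset_closure.trans_eq (hS t ht)).trans <|
    closure_image_eval_subset_of_approx fun y hy ε hε ↦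
      ((hcl y hy.1).1 hy ε hε).imp fun z hz ↦ ⟨⟨hz.1, hz.2.1⟩, hz.2.2 t ht⟩
end

section
/- Let (Ω,F) be a measurable space, T > 0 finite, h : Ω × [0,T] × ℝ^d → ℝ ∪ {±∞} a normal integrand whose epigraphical mapping (ω,t) ⇒ epi h_t(·,ω) is closed-valued and F ⊗ B([0,T])-measurable, and let μ be a random nonnegative Radon measure on [0,T] (i.e., ω ↦ μ(ω,B) is F-measurable for every Borel B ⊆ [0,T]). Then the map (ω, y) ↦ I_h(ω, y) := ∫_{[0,T]} h_t(y_t, ω) dμ(ω)(t) is F ⊗ B(D)-measurable on Ω × D. -/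
/-!
The integrand `(ω, y, t) ↦ h_t(y_t, ω)` is jointly measurable, for two reasons. First, a point lies
off a closed-valued random set exactly when some basic open neighbourhood of it misses that set, so
a measurable closed-valued mapping has a measurable graph; applied to epigraphs, this makes `h`
jointly measurable. Second, a right-continuous path is the limit of its values at points that
approach `t` from the right inside one fixed countable set, so `(y, t) ↦ y_t` is jointly measurable.
A measurable family of finite measures is an s-finite kernel, and integrating against such a kernel
preserves measurability.
-/

open MeasureTheory Filter Set Topology
open scoped ENNReal Classical

/-- The space `D` of càdlàg functions `[0,T] → ℝ^d`. -/
def Dspace (T : ℝ) (d : ℕ) := {y : ℝ → Euc d // IsCadlagOn T y}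

/-- The σ-algebra `B(D)` on `D` generated by the evaluation maps `y ↦ y_t`, `t ∈ [0,T]`
(the Borel σ-algebra of the Skorokhod topology). -/
noncomputable def Dsigma (T : ℝ) (d : ℕ) : MeasurableSpace (Dspace T d) :=
  ⨆ t ∈ Set.Icc (0:ℝ) T,
    MeasurableSpace.comap (fun y : Dspace T d => y.1 t) inferInstance

open ProbabilityTheory TopologicalSpace

section RandomClosedSets

variable {S Z E : Type*} [MeasurableSpace S] [TopologicalSpace Z] [SecondCountableTopology Z]
  [MeasurableSpace Z] [OpensMeasurableSpace Z] [TopologicalSpace E]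

lemma measurableSet_graph_of_isClosed_of_measurableSet_hits {C : S → Set Z}
    (hC : ∀ s, IsClosed (C s))
    (hits : ∀ O, IsOpen O → MeasurableSet {s | (O ∩ C s).Nonempty}) :
    MeasurableSet {p : S × Z | p.2 ∈ C p.1} := by
  have graph_compl : {p : S × Z | p.2 ∈ C p.1}ᶜ =
      ⋃ V ∈ countableBasis Z, {s | (V ∩ C s).Nonempty}ᶜ ×ˢ V := by
    ext ⟨s, z⟩
    have notMem_iff : z ∉ C s ↔ ∃ V ∈ countableBasis Z, z ∈ V ∧ V ⊆ (C s)ᶜ :=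
      (hC s).isOpen_compl.mem_nhds_iff.symm.trans (isBasis_countableBasis Z).mem_nhds_iff
    simp only [mem_compl_iff, mem_ofPred_eq, notMem_iff, mem_iUnion, mem_prod, exists_prop,
      not_nonempty_iff_eq_empty, ← disjoint_iff_inter_eq_empty, subset_compl_iff_disjoint_right,
      and_comm (a := z ∈ _)]
  rw [← MeasurableSet.compl_iff, graph_compl]
  refine MeasurableSet.biUnion (countable_countableBasis Z) fun V hV => ?_
  have hVo := isOpen_of_mem_countableBasis hV
  exact (hits V hVo).compl.prod hVo.measurableSet

lemma measurable_ereal_of_measurableSet_le_coe {f : S → EReal}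
    (hf : ∀ a : ℝ, MeasurableSet {s | f s ≤ a}) : Measurable f := by
  refine measurable_of_Iio fun b => ?_
  have preimage_Iio : f ⁻¹' Iio b = ⋃ (r : ℚ) (_ : ((r : ℝ) : EReal) < b), {s | f s ≤ (r : ℝ)} := by
    ext s
    simp only [mem_preimage, mem_Iio, mem_iUnion, mem_ofPred_eq, exists_prop]
    constructor
    · intro hs
      obtain ⟨r, hsr, hrb⟩ := EReal.lt_iff_exists_rat_btwn.1 hs
      exact ⟨r, hrb, hsr.le⟩
    · rintro ⟨r, hrb, hsr⟩
      exact hsr.trans_lt hrb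
  rw [preimage_Iio]
  exact MeasurableSet.iUnion fun r => MeasurableSet.iUnion fun _ => hf r

/-- The epigraph of an extended-real-valued function, as a subset of `E × ℝ`: only the finite
levels are recorded. -/
def epigraph (f : E → EReal) : Set (E × ℝ) := {p | f p.1 ≤ (p.2 : EReal)}

/-- A normal integrand with parameter space `S`: the epigraphical mapping `s ↦ epigraph (h s)` is
closed-valued and measurable, the latter in the sense that the set of parameters at which it meets
a given open set is measurable. -/
structure IsNormalIntegrand (h : S → E → EReal) : Prop where
  isClosed_epigraph : ∀ s, IsClosed (epigraph (h s))
  measurableSet_hits : ∀ O, IsOpen O → MeasurableSet {s | (O ∩ epigraph (h s)).Nonempty}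

namespace IsNormalIntegrand

lemma measurable_uncurry [SecondCountableTopology E] [MeasurableSpace E] [OpensMeasurableSpace E]
    {h : S → E → EReal} (hh : IsNormalIntegrand h) : Measurable fun p : S × E => h p.1 p.2 := by
  refine measurable_ereal_of_measurableSet_le_coe fun a => ?_
  have graph_meas := measurableSet_graph_of_isClosed_of_measurableSet_hits
    hh.isClosed_epigraph hh.measurableSet_hits
  have slice_meas : Measurable fun p : S × E => (p.1, (p.2, a)) := by fun_prop
  exact slice_meas graph_meas

lemma of_forall_mem {ι : Type*} [MeasurableSpace ι] {I : Set ι} {h : S → ι → E → EReal}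
    (hcl : ∀ s, ∀ t ∈ I, IsClosed (epigraph (h s t)))
    (hits : ∀ O, IsOpen O →
      MeasurableSet {p : S × ι | p.2 ∈ I ∧ (O ∩ epigraph (h p.1 p.2)).Nonempty}) :
    IsNormalIntegrand fun p : S × I => h p.1 p.2 where
  isClosed_epigraph p := hcl p.1 p.2 p.2.2
  measurableSet_hits O hO := by
    have coe_meas : Measurable fun p : S × I => (p.1, (p.2 : ι)) := by fun_prop
    simpa using coe_meas (hits O hO)

end IsNormalIntegrand

end RandomClosedSets

section RightContinuousPaths

variable {ι : Type*} [LinearOrder ι]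

/-- Approximation of `t` from the right by the points of a sequence `s`: the smallest among
`s 0, …, s (n - 1)` that is at least `t`. As long as there is none, the value is `s 0`. -/
noncomputable def rightApprox (s : ℕ → ι) : ℕ → ι → ι
  | 0, _ => s 0
  | n + 1, t =>
    if t ≤ s n ∧ (rightApprox s n t < t ∨ s n < rightApprox s n t) then s n else rightApprox s n t

lemma rightApprox_mem_Icc {s : ℕ → ι} {t : ι} {k n : ℕ} (hkn : k < n) (hk : t ≤ s k) :
    rightApprox s n t ∈ Icc t (s k) := by
  induction n with
  | zero => omega
  | succ n ih =>
    rcases Nat.lt_succ_iff_lt_or_eq.1 hkn with hlt | rfl <;> grind [rightApprox]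

variable [TopologicalSpace ι] [OrderTopology ι]

lemma tendsto_rightApprox {s : ℕ → ι} {t : ι} (ht : t ∈ closure (range s ∩ Ici t)) :
    Tendsto (fun n => rightApprox s n t) atTop (𝓝[≥] t) := by
  intro U hU
  have eventually_Icc_subset : ∀ᶠ x in 𝓝[≥] t, Icc t x ⊆ U :=
    (tendsto_const_pure.mono_right (pure_le_nhdsWithin self_mem_Ici)).Icc tendsto_id
      |>.eventually (eventually_smallSets_subset.2 hU)
  have frequently_range : ∃ᶠ x in 𝓝[≥] t, x ∈ range s :=
    frequently_nhdsWithin_iff.2 (mem_closure_iff_frequently.1 ht)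
  obtain ⟨_, ⟨⟨k, rfl⟩, hkU⟩, hk⟩ := (frequently_range.and_eventually
    eventually_Icc_subset).and_eventually self_mem_nhdsWithin |>.exists
  refine mem_map.2 ((eventually_gt_atTop k).mono fun n hn => ?_)
  exact hkU (rightApprox_mem_Icc hn hk)

variable [SecondCountableTopology ι]

variable (ι) in
lemma exists_countable_forall_mem_closure_inter_Ici :
    ∃ D : Set ι, D.Countable ∧ ∀ t, t ∈ closure (D ∩ Ici t) := by
  obtain ⟨D, hDc, hD⟩ := exists_countable_dense ι
  -- A point isolated from the right is approached only by itself; there are countably many of them.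
  refine ⟨D ∪ {t | 𝓝[>] t = ⊥}, hDc.union countable_setOfPred_isolated_right, fun t => ?_⟩
  by_cases ht : 𝓝[>] t = ⊥
  · exact subset_closure ⟨Or.inr ht, self_mem_Ici⟩
  · have ht' : t ∈ closure (Ioi t) := mem_closure_iff_nhdsWithin_neBot.2 (neBot_iff.2 ht)
    have hIoi : closure (Ioi t) ⊆ closure (Ioi t ∩ D) :=
      closure_minimal (hD.open_subset_closure_inter isOpen_Ioi) isClosed_closure
    have hsub : Ioi t ∩ D ⊆ (D ∪ {t | 𝓝[>] t = ⊥}) ∩ Ici t :=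
      fun x hx => ⟨Or.inl hx.2, mem_Ici_of_Ioi hx.1⟩
    exact closure_mono hsub (hIoi ht')

variable [MeasurableSpace ι] [OpensMeasurableSpace ι]

lemma measurableSet_rightApprox_update {s : ℕ → ι} {n : ℕ} (hs : Measurable (rightApprox s n)) :
    MeasurableSet {t | t ≤ s n ∧ (rightApprox s n t < t ∨ s n < rightApprox s n t)} :=
  measurableSet_Iic.inter
    ((measurableSet_lt hs measurable_id).union (measurableSet_lt measurable_const hs))

lemma measurable_rightApprox (s : ℕ → ι) (n : ℕ) : Measurable (rightApprox s n) := by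
  induction n with
  | zero => exact measurable_const
  | succ n ih => exact .ite (measurableSet_rightApprox_update ih) measurable_const ih

variable {Y E : Type*} [MeasurableSpace Y] [MeasurableSpace E] {X : Y → ι → E}

lemma measurable_uncurry_rightApprox (hX : ∀ t, Measurable fun y => X y t) (s : ℕ → ι) (n : ℕ) :
    Measurable fun p : Y × ι => X p.1 (rightApprox s n p.2) := by
  induction n with
  | zero => exact (hX (s 0)).comp measurable_fst
  | succ n ih =>
    simp only [rightApprox, apply_ite]
    have update_meas := measurableSet_rightApprox_update (measurable_rightApprox s n)
    exact .ite (measurable_snd update_meas) ((hX (s n)).comp measurable_fst) ih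

lemma measurable_uncurry_of_rightContinuous [TopologicalSpace E] [PseudoMetrizableSpace E]
    [BorelSpace E] (hX : ∀ t, Measurable fun y => X y t)
    (hcont : ∀ y t, ContinuousWithinAt (X y) (Ioi t) t) :
    Measurable fun p : Y × ι => X p.1 p.2 := by
  cases isEmpty_or_nonempty ι
  · exact measurable_of_empty _
  obtain ⟨D, hDc, hD⟩ := exists_countable_forall_mem_closure_inter_Ici ι
  obtain ⟨s, rfl⟩ := hDc.exists_eq_range
    ((closure_nonempty_iff.1 ⟨_, hD (Classical.arbitrary ι)⟩).mono inter_subset_left)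
  refine measurable_of_tendsto_metrizable (measurable_uncurry_rightApprox hX s)
    (tendsto_pi_nhds.2 fun p => ?_)
  exact (continuousWithinAt_Ioi_iff_Ici.1 (hcont p.1 p.2)).tendsto.comp
    (tendsto_rightApprox (hD p.2))

end RightContinuousPaths

section Integration

variable {Ω ι : Type*} [MeasurableSpace Ω] [MeasurableSpace ι]

lemma isSFiniteKernel_of_forall_isFiniteMeasure (κ : Kernel Ω ι) (hκ : ∀ ω, IsFiniteMeasure (κ ω)) :
    IsSFiniteKernel κ := by
  have mass_meas : Measurable fun ω => κ ω univ := κ.measurable_coe .univ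
  -- The masses need not be uniformly bounded, so `κ` itself need not be a finite kernel.
  let normalized : Kernel Ω ι := ⟨fun ω => (κ ω univ)⁻¹ • κ ω, by
    refine Measure.measurable_of_measurable_coe _ fun B hB => ?_
    exact mass_meas.inv.mul (κ.measurable_coe hB)⟩
  have : IsFiniteKernel normalized := ⟨1, ENNReal.one_lt_top, fun ω => by
    simp [normalized, ENNReal.inv_mul_le_one]⟩
  have withDensity_mass : normalized.withDensity (fun ω _ => κ ω univ) = κ := by
    ext1 ω
    rw [Kernel.withDensity_apply _ (by fun_prop), withDensity_const]
    rcases eq_or_ne (κ ω) 0 with h0 | h0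
    · simp [normalized, h0]
    · change κ ω univ • (κ ω univ)⁻¹ • κ ω = κ ω
      rw [smul_smul, ENNReal.mul_inv_cancel (Measure.measure_univ_ne_zero.2 h0)
        (measure_ne_top _ _), one_smul]
  rw [← withDensity_mass]
  exact Kernel.IsSFiniteKernel.withDensity _ fun ω _ => measure_ne_top _ _

lemma measurable_erealPos : Measurable erealPos := measurable_ereal_toENNReal

lemma measurable_eIntegral_kernel (κ : Kernel Ω ι) [IsSFiniteKernel κ] {f : Ω → ι → EReal}
    (hf : Measurable fun p : Ω × ι => f p.1 p.2) :
    Measurable fun ω => eIntegral (κ ω) (f ω) := by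
  have pos_meas : Measurable fun ω => ∫⁻ t, erealPos (f ω t) ∂κ ω :=
    Measurable.lintegral_kernel_prod_right (f := fun ω t => erealPos (f ω t))
      (measurable_erealPos.comp hf)
  have neg_meas : Measurable fun ω => ∫⁻ t, erealPos (-f ω t) ∂κ ω :=
    Measurable.lintegral_kernel_prod_right (f := fun ω t => erealPos (-f ω t))
      (measurable_erealPos.comp hf.neg)
  exact Measurable.ite (pos_meas (measurableSet_singleton _)) measurable_const
    (pos_meas.coe_ereal_ennreal.sub neg_meas.coe_ereal_ennreal)

lemma eIntegral_comap_subtype_coe {I : Set ι} (hI : MeasurableSet I) {μ : Measure ι}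
    (hμ : μ Iᶜ = 0) (f : ι → EReal) :
    eIntegral (μ.comap ((↑) : I → ι)) (fun t => f t) = eIntegral μ f := by
  have restrict_eq : μ.restrict I = μ := Measure.restrict_eq_self_of_ae_mem hμ
  have lintegral_eq (g : ι → ℝ≥0∞) : ∫⁻ t : I, g t ∂μ.comap (↑) = ∫⁻ t, g t ∂μ := by
    rw [lintegral_subtype_comap hI, restrict_eq]
  simp only [eIntegral, lintegral_eq (fun t => erealPos (f t)),
    lintegral_eq (fun t => erealPos (-f t))]

end Integration

theorem statement5_general {Ω Y ι E : Type*} [MeasurableSpace Ω] [MeasurableSpace Y]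
    [LinearOrder ι] [TopologicalSpace ι] [OrderTopology ι] [SecondCountableTopology ι]
    [MeasurableSpace ι] [OpensMeasurableSpace ι] [TopologicalSpace E] [PseudoMetrizableSpace E]
    [SecondCountableTopology E] [MeasurableSpace E] [BorelSpace E] {I : Set ι} [OrdConnected I]
    (κ : Kernel Ω ι) [IsSFiniteKernel κ] (hκ : ∀ ω, κ ω Iᶜ = 0)
    {X : Y → ι → E} (hXmeas : ∀ t ∈ I, Measurable fun y => X y t)
    (hXcont : ∀ y, ∀ t ∈ I, ContinuousWithinAt (X y) (I ∩ Ioi t) t)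
    {h : Ω → ι → E → EReal} (hh : IsNormalIntegrand fun p : Ω × I => h p.1 p.2) :
    Measurable fun p : Ω × Y => eIntegral (κ p.1) fun t => h p.1 t (X p.2 t) := by
  have hI : MeasurableSet I := OrdConnected.measurableSet ‹_›
  have path_meas : Measurable fun q : Y × I => X q.1 q.2 :=
    measurable_uncurry_of_rightContinuous (X := fun y (t : I) => X y t)
      (fun t => hXmeas t t.2) fun y t =>
      (hXcont y t t.2).comp continuous_subtype_val.continuousWithinAt fun u hu => ⟨u.2, hu⟩
  have integrand_meas : Measurable fun q : (Ω × Y) × I => h q.1.1 q.2 (X q.1.2 q.2) :=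
    hh.measurable_uncurry.comp ((measurable_fst.fst.prodMk measurable_snd).prodMk
      (path_meas.comp (measurable_fst.snd.prodMk measurable_snd)))
  let κI : Kernel (Ω × Y) I :=
    (κ.comap Prod.fst measurable_fst).comapRight (MeasurableEmbedding.subtype_coe hI)
  have integral_meas := measurable_eIntegral_kernel κI
    (f := fun p t => h p.1 t (X p.2 t)) integrand_meas
  convert integral_meas using 2 with p
  exact (eIntegral_comap_subtype_coe hI (hκ p.1) fun t => h p.1 t (X p.2 t)).symm

section CadlagPaths

variable {T : ℝ} {d : ℕ}

noncomputable instance : MeasurableSpace (Dspace T d) := Dsigma T d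

lemma measurable_Dspace_eval {t : ℝ} (ht : t ∈ Icc 0 T) :
    Measurable fun y : Dspace T d => y.1 t :=
  measurable_iff_comap_le.2 (le_iSup₂_of_le t ht le_rfl)

lemma IsCadlagOn.continuousWithinAt {y : ℝ → Euc d} (hy : IsCadlagOn T y) {t : ℝ}
    (ht : t ∈ Icc 0 T) : ContinuousWithinAt y (Icc 0 T ∩ Ioi t) t := by
  rcases ht.2.eq_or_lt with rfl | htT
  · have : Icc 0 t ∩ Ioi t = ∅ := by grind
    simp [this, ContinuousWithinAt]
  · exact ContinuousWithinAt.mono (hy.1 t ⟨ht.1, htT⟩) inter_subset_right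

end CadlagPaths

/-- **Joint measurability of the integral functional** (Lemma 4.1): for a normal
integrand `h` on `Ω × [0,T] × ℝ^d` and a random nonnegative (Radon) measure `μ` on
`[0,T]`, the map `(ω,y) ↦ I_h(ω,y) = ∫ h_t(y_t,ω) dμ(ω)(t)` is `F ⊗ B(D)`-measurable. -/
theorem statement5 {Ω : Type*} [mΩ : MeasurableSpace Ω] {d : ℕ} (T : ℝ) (hT : 0 < T)
    (μ : Ω → Measure ℝ) (hμfin : ∀ ω, IsFiniteMeasure (μ ω))
    (hμconc : ∀ ω, μ ω (Set.Icc (0:ℝ) T)ᶜ = 0)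
    (hμmeas : ∀ B : Set ℝ, MeasurableSet B → Measurable fun ω => μ ω B)
    (h : Ω → ℝ → Euc d → EReal)
    -- the epigraphical mapping of `h` is closed-valued ...
    (hcl : ∀ ω : Ω, ∀ t ∈ Set.Icc (0:ℝ) T,
      IsClosed {p : Euc d × ℝ | h ω t p.1 ≤ (p.2 : EReal)})
    -- ... and `F ⊗ B([0,T])`-measurable
    (hmeas : ∀ O : Set (Euc d × ℝ), IsOpen O →
      MeasurableSet {p : Ω × ℝ | p.2 ∈ Set.Icc (0:ℝ) T ∧
        ∃ q ∈ O, h p.1 p.2 q.1 ≤ (q.2 : EReal)}) :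
    @Measurable (Ω × Dspace T d) EReal (mΩ.prod (Dsigma T d)) _
      (fun p => eIntegral (μ p.1) fun t => h p.1 t (p.2.1 t)) := by
  let κ : Kernel Ω ℝ := ⟨μ, Measure.measurable_of_measurable_coe _ hμmeas⟩
  have := isSFiniteKernel_of_forall_isFiniteMeasure κ hμfin
  exact statement5_general κ hμconc (fun _ => measurable_Dspace_eval)
    (fun y _ => y.2.continuousWithinAt) (IsNormalIntegrand.of_forall_mem hcl hmeas)
end
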